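/- arXiv:1708.03010 — 2 statements merged into one kernel-verified Lean document; each statement's English description precedes it below -/
import Mathlib

section
/- Let (R, 𝔪) be a regular local ring and let 𝔭 ⊆ 𝔪 be a prime ideal of R. Then for every positive integer n, the n-th symbolic power of 𝔭 is contained in the n-th power of the maximal ideal: 𝔭^{(n)} ⊆ 𝔪^n. -/
/-- The `n`-th symbolic power of a prime ideal `P`:
`P^{(n)} = P^n R_P ∩ R`, the preimage in `R` of `P^n R_P` under the localization map. -/
noncomputable def symbolicPower {R : Type*} [CommRing R] (P : Ideal R) [P.IsPrime] (n : ℕ) :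
    Ideal R :=
  (Ideal.map (algebraMap R (Localization.AtPrime P)) (P ^ n)).comap
    (algebraMap R (Localization.AtPrime P))

/-- A (Noetherian) local ring is regular if its maximal ideal can be generated
by `dim R` elements. -/
def IsRegularLocal (R : Type*) [CommRing R] [IsLocalRing R] : Prop :=
  IsNoetherianRing R ∧
    ∃ s : Finset R, Ideal.span (s : Set R) = IsLocalRing.maximalIdeal R ∧
      (s.card : WithBot (WithTop ℕ)) = ringKrullDim R

open MvPolynomial IsLocalRing

/-!
If `f ∈ P^{(n)}`, then `s f ∈ P^n` for some `s ∉ P`, and one may assume `s ∈ 𝔪`. A prime `q ⊇ P`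
maximal among those not containing `s` has `dim R/q = 1`, so by Krull–Akizuki `R/q` is dominated by
a discrete valuation ring `W` with uniformizer `t`. Let `A = R[X_w : w ∈ W]`, mapped onto `W` by
`X_w ↦ w`, with kernel `Q`, and let `m` be the preimage of the maximal ideal, so that
`m = Q + (X_t)`. Since `R` is regular, `gr_m A` is a polynomial ring over `A/m` in linear forms:
the initial forms of `X_t` and of suitable elements of `Q`. Hence the forms from `Q` generate a
prime ideal not containing the form of `X_t`. Now `X_v s ≡ X_t^a` modulo `Q` for some `v` and `a`,
and `X_v s f ∈ Q^n`, so `f ∈ m^n ∩ R = 𝔪^n`.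
-/

section QuasiRegular

variable {A B ι κ : Type*} [CommRing A] [CommRing B]

/-- A family `z` is quasi-regular with respect to an ideal `I` if no form over `A` with a
coefficient outside `I` takes a value at `z` of higher `I`-adic order than its degree.  When `z`
consists of elements of `I`, this says that the initial forms of the `z i` are algebraically
independent over `A ⧸ I` in the associated graded ring of `I`. -/
def IsQuasiRegularFamily (I : Ideal A) (z : ι → A) : Prop :=
  ∀ (n : ℕ) (F : MvPolynomial ι A), F.IsHomogeneous n → eval z F ∈ I ^ (n + 1) →
    ∀ d, coeff d F ∈ I

lemma eval_mem_mul_pow {I J : Ideal A} {z : ι → A} (hz : ∀ i, z i ∈ J) {n : ℕ}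
    {F : MvPolynomial ι A} (hF : F ∈ idealOfVars ι A ^ n) (hI : ∀ d, coeff d F ∈ I) :
    eval z F ∈ I * J ^ n := by
  rw [eval_eq]
  refine sum_mem fun d hd => Ideal.mul_mem_mul (hI d) ?_
  have hprod : ∏ i ∈ d.support, z i ^ d i ∈ ∏ i ∈ d.support, J ^ d i :=
    Ideal.prod_mem_prod fun i _ => Ideal.pow_mem_pow (hz i) _
  rw [Finset.prod_pow_eq_pow_sum] at hprod
  exact Ideal.pow_le_pow_right ((mem_pow_idealOfVars_iff n F).1 hF d hd) hprod

lemma eval_mem_pow {J : Ideal A} {z : ι → A} (hz : ∀ i, z i ∈ J) {n : ℕ}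
    {F : MvPolynomial ι A} (hF : F ∈ idealOfVars ι A ^ n) : eval z F ∈ J ^ n := by
  simpa using eval_mem_mul_pow (I := ⊤) hz hF (by simp)

lemma mem_pow_idealOfVars_of_isHomogeneous {n : ℕ} {F : MvPolynomial ι A}
    (hF : F.IsHomogeneous n) : F ∈ idealOfVars ι A ^ n :=
  (mem_pow_idealOfVars_iff' n F).2 fun _ hd => hF.coeff_eq_zero hd.ne

lemma exists_isHomogeneous_eval_eq_of_mem_mul_span_pow {I : Ideal A} {z : ι → A} {n : ℕ} {y : A}
    (hy : y ∈ I * Ideal.span (Set.range z) ^ n) :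
    ∃ F : MvPolynomial ι A, F.IsHomogeneous n ∧ (∀ d, coeff d F ∈ I) ∧ eval z F = y := by
  induction hy using Submodule.mul_induction_on' with
  | mem_mul_mem a ha b hb =>
    obtain ⟨F, hF, rfl⟩ := (Ideal.mem_span_pow_iff_exists_isHomogeneous z b).1 hb
    refine ⟨C a * F, by simpa using (isHomogeneous_C ι a).mul hF, fun d => ?_, by simp⟩
    rw [coeff_C_mul]
    exact I.mul_mem_right _ ha
  | add x _ y _ hx hy =>
    obtain ⟨F, hF, hFI, rfl⟩ := hx
    obtain ⟨G, hG, hGI, rfl⟩ := hy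
    exact ⟨F + G, hF.add hG, fun d => by simpa using I.add_mem (hFI d) (hGI d), by simp⟩

namespace IsQuasiRegularFamily

variable {I : Ideal A} {z : ι → A}

lemma coeff_mem (h : IsQuasiRegularFamily I z) (hz : ∀ i, z i ∈ I) {n : ℕ}
    {F : MvPolynomial ι A} (hF : F ∈ idealOfVars ι A ^ n) (hFz : eval z F ∈ I ^ (n + 1))
    {d : ι →₀ ℕ} (hd : d.degree = n) : coeff d F ∈ I := by
  classical
  have htail : F - homogeneousComponent n F ∈ idealOfVars ι A ^ (n + 1) := by
    refine (mem_pow_idealOfVars_iff' _ _).2 fun d hd => ?_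
    rw [coeff_sub, coeff_homogeneousComponent]
    split_ifs with hdn
    · exact sub_self _
    · rw [sub_zero, (mem_pow_idealOfVars_iff' n F).1 hF d (by lia)]
  have hcomp : eval z (homogeneousComponent n F) ∈ I ^ (n + 1) := by
    simpa using sub_mem hFz (eval_mem_pow hz htail)
  simpa [coeff_homogeneousComponent, hd] using
    h n _ (homogeneousComponent_isHomogeneous n F) hcomp d

lemma comp_injective {e : κ → ι} (h : IsQuasiRegularFamily I z) (he : Function.Injective e) :
    IsQuasiRegularFamily I (z ∘ e) := fun n F hF hFz d => by
  have := h n (rename e F) hF.rename_isHomogeneous (by rwa [eval_rename]) (d.mapDomain e)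
  rwa [coeff_rename_mapDomain _ he] at this

lemma of_finite_subfamilies
    (h : ∀ T : Finset ι, IsQuasiRegularFamily I fun i : T => z i) :
    IsQuasiRegularFamily I z := fun n F hF hFz d => by
  obtain ⟨T, G, rfl⟩ := exists_finset_rename F
  by_cases hd : ∃ u : T →₀ ℕ, u.mapDomain Subtype.val = d
  · obtain ⟨u, rfl⟩ := hd
    rw [coeff_rename_mapDomain _ Subtype.val_injective]
    rw [eval_rename] at hFz
    exact h T n G ((IsHomogeneous.rename_isHomogeneous_iff Subtype.val_injective).1 hF) hFz u
  · rw [coeff_rename_eq_zero _ _ _ fun u hu => (hd ⟨u, hu⟩).elim]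
    exact zero_mem _

lemma comap {J : Ideal B} (φ : A →+* B) (h : IsQuasiRegularFamily J (φ ∘ z)) :
    IsQuasiRegularFamily (J.comap φ) z := fun n F hF hFz d => by
  have hmap : φ (eval z F) ∈ J ^ (n + 1) := Ideal.le_comap_pow φ _ hFz
  rw [map_eval] at hmap
  rw [Ideal.mem_comap, ← coeff_map]
  exact h n (map φ F) (hF.map φ) hmap d

end IsQuasiRegularFamily

lemma linearIndependent_toCotangent_iff {I : Ideal A} {z : ι → I} :
    LinearIndependent (A ⧸ I) (I.toCotangent ∘ z) ↔
      ∀ (s : Finset ι) (c : ι → A), ∑ i ∈ s, c i * (z i : A) ∈ I ^ 2 → ∀ i ∈ s, c i ∈ I := by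
  have hsum (s : Finset ι) (c : ι → A) :
      ∑ i ∈ s, Ideal.Quotient.mk I (c i) • I.toCotangent (z i) = 0 ↔
        ∑ i ∈ s, c i * (z i : A) ∈ I ^ 2 := by
    have : ∑ i ∈ s, Ideal.Quotient.mk I (c i) • I.toCotangent (z i) =
        I.toCotangent (∑ i ∈ s, c i • z i) := by
      rw [map_sum]
      exact Finset.sum_congr rfl fun i _ => (I.toCotangent.map_smul (c i) (z i)).symm
    rw [this, Ideal.toCotangent_eq_zero]
    simp
  rw [linearIndependent_iff']
  constructor
  · intro h s c hc i hi
    exact Ideal.Quotient.eq_zero_iff_mem.1 (h s (fun i => Ideal.Quotient.mk I (c i))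
      ((hsum s c).2 hc) i hi)
  · intro h s g hg i hi
    choose c hc using fun i => Ideal.Quotient.mk_surjective (g i)
    obtain rfl : (fun i => Ideal.Quotient.mk I (c i)) = g := funext hc
    exact Ideal.Quotient.eq_zero_iff_mem.2 (h s c ((hsum s c).1 hg) i hi)

end QuasiRegular

section Minors

lemma eval₂_mul_left_of_isHomogeneous {A B ι : Type*} [CommRing A] [CommRing B] {n : ℕ}
    {F : MvPolynomial ι A} (hF : F.IsHomogeneous n) (φ : A →+* B) (c : B) (g : ι → B) :
    eval₂ φ (fun i => c * g i) F = c ^ n * eval₂ φ g F := by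
  rw [eval₂_eq, eval₂_eq, Finset.mul_sum]
  refine Finset.sum_congr rfl fun d hd => ?_
  have hdeg : ∑ i ∈ d.support, d i = n := by
    by_contra h
    exact mem_support_iff.1 hd (hF.coeff_eq_zero h)
  simp_rw [mul_pow, Finset.prod_mul_distrib]
  rw [Finset.prod_pow_eq_pow_sum, hdeg]
  ring

variable {A ι : Type*} [CommRing A] (z : ι → A) (i₀ : ι)

/-- The ideal of `A[X]` generated by the `2 × 2` minors of the matrix with rows `(X i, z i)` that
involve the row `i₀`. -/
noncomputable def minorsIdeal : Ideal (MvPolynomial ι A) :=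
  Ideal.span ((fun i => X i₀ * C (z i) - X i * C (z i₀)) '' {i₀}ᶜ)

lemma minor_mem_minorsIdeal (i : ι) : X i₀ * C (z i) - X i * C (z i₀) ∈ minorsIdeal z i₀ := by
  rcases eq_or_ne i i₀ with rfl | hi
  · rw [sub_self]
    exact zero_mem _
  · exact Ideal.subset_span ⟨i, hi, rfl⟩

lemma mul_pow_mem_minorsIdeal {n : ℕ} {F : MvPolynomial ι A} (hF : F.IsHomogeneous n)
    (hFz : eval z F = 0) : F * C (z i₀) ^ n ∈ minorsIdeal z i₀ := by
  rw [← Ideal.Quotient.eq_zero_iff_mem]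
  set q := Ideal.Quotient.mk (minorsIdeal z i₀)
  have hminor (i : ι) : q (C (z i₀)) * q (X i) = q (X i₀) * q (C (z i)) := by
    rw [← map_mul, ← map_mul, eq_comm, Ideal.Quotient.eq, mul_comm (C (z i₀))]
    exact minor_mem_minorsIdeal z i₀ i
  have hz : eval₂ (q.comp C) (fun i => q (C (z i))) F = 0 := by
    have := hom_eval₂ F (RingHom.id A) (q.comp C) z
    rw [eval₂_id, hFz, map_zero] at this
    exact this.symm
  have hX : eval₂ (q.comp C) (fun i => q (X i)) F = q F := by
    rw [← hom_eval₂, eval₂_eta]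
  calc q (F * C (z i₀) ^ n) = q (C (z i₀)) ^ n * eval₂ (q.comp C) (fun i => q (X i)) F := by
        rw [hX, map_mul, map_pow, mul_comm]
    _ = q (X i₀) ^ n * eval₂ (q.comp C) (fun i => q (C (z i))) F := by
        simp_rw [← eval₂_mul_left_of_isHomogeneous hF, hminor]
    _ = 0 := by rw [hz, mul_zero]

lemma map_C_mem_minimalPrimes_minorsIdeal [((Ideal.span (Set.range z)).map (C (σ := ι))).IsPrime]
    {n : ℕ} {F : MvPolynomial ι A} (hF : F.IsHomogeneous n) (hFz : eval z F = 0)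
    {d : ι →₀ ℕ} (hd : coeff d F ∉ Ideal.span (Set.range z)) :
    (Ideal.span (Set.range z)).map C ∈ (minorsIdeal z i₀).minimalPrimes := by
  set 𝔐 := (Ideal.span (Set.range z)).map (C (σ := ι))
  have hz (i : ι) : C (z i) ∈ 𝔐 := Ideal.mem_map_of_mem _ (Ideal.subset_span ⟨i, rfl⟩)
  have hF𝔐 : F ∉ 𝔐 := fun h => hd (mem_map_C_iff.1 h d)
  have hX : (X i₀ : MvPolynomial ι A) ∉ 𝔐 := fun h => by
    classical
    have h1 := mem_map_C_iff.1 h (Finsupp.single i₀ 1)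
    rw [coeff_single_X, if_pos ⟨rfl, rfl⟩, ← Ideal.eq_top_iff_one] at h1
    exact hd (h1 ▸ Submodule.mem_top)
  refine ⟨⟨inferInstance, Ideal.span_le.2 ?_⟩, ?_⟩
  · rintro _ ⟨i, -, rfl⟩
    exact 𝔐.sub_mem (𝔐.mul_mem_left _ (hz _)) (𝔐.mul_mem_left _ (hz _))
  · rintro q ⟨hq, hle⟩ hq𝔐
    have h₀ : C (z i₀) ∈ q := by
      rcases hq.mem_or_mem (hle (mul_pow_mem_minorsIdeal z i₀ hF hFz)) with h | h
      · exact absurd (hq𝔐 h) hF𝔐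
      · exact hq.mem_of_pow_mem _ h
    have h (i : ι) : C (z i) ∈ q := by
      have := q.add_mem (hle (minor_mem_minorsIdeal z i₀ i)) (q.mul_mem_left (X i) h₀)
      rw [sub_add_cancel] at this
      exact (hq.mem_or_mem this).resolve_left fun h => hX (hq𝔐 h)
    rw [Ideal.map_le_iff_le_comap, Ideal.span_le]
    rintro _ ⟨i, rfl⟩
    exact h i

end Minors

section RegularSystemOfParameters

universe u

variable {B : Type u} {ι κ : Type*} [CommRing B]

/-- A regular system of parameters of a local ring: a finite family generating the maximal ideal,
with as many members as the dimension.  Only `≤` is recorded, because Krull's height theorem gives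
the reverse inequality for Noetherian rings. -/
structure IsRegularSystemOfParameters [IsLocalRing B] (z : ι → B) : Prop where
  finite : Finite ι
  span_range : Ideal.span (Set.range z) = maximalIdeal B
  card_le_height : (Nat.card ι : ℕ∞) ≤ (maximalIdeal B).height

lemma isPrime_map_C (σ : Type*) (P : Ideal B) [P.IsPrime] : (P.map (C (σ := σ))).IsPrime := by
  rw [← Ideal.Quotient.isDomain_iff_prime]
  exact (quotientEquivQuotientMvPolynomial (σ := σ) P).symm.toMulEquiv.isDomain _

lemma height_le_height_map_C [IsNoetherianRing B] (σ : Type*) [Finite σ] (P : Ideal B)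
    [P.IsPrime] :
    P.height ≤ (P.map (C (σ := σ))).height := by
  have := isPrime_map_C σ P
  have : (P.map (C (σ := σ))).LiesOver P := by
    refine ⟨le_antisymm Ideal.le_comap_map fun x hx => ?_⟩
    simpa using mem_map_C_iff.1 hx 0
  rw [Ideal.height_eq_height_add_of_liesOver_of_hasGoingDown P (P.map (C (σ := σ)))]
  exact le_self_add

namespace IsRegularSystemOfParameters

variable [IsLocalRing B] [IsNoetherianRing B] {z : ι → B}

/-- Otherwise `𝔪 B[X]`, of height at least `dim B`, would be minimal over the ideal of minors, which
has fewer than `dim B` generators, against Krull's height theorem. -/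
lemma coeff_mem_of_eval_eq_zero (hz : IsRegularSystemOfParameters z) {n : ℕ}
    {F : MvPolynomial ι B} (hF : F.IsHomogeneous n) (hFz : eval z F = 0) (d : ι →₀ ℕ) :
    coeff d F ∈ maximalIdeal B := by
  have := hz.finite
  by_contra hd
  rcases isEmpty_or_nonempty ι with _ | ⟨⟨i₀⟩⟩
  · rw [eq_C_of_isEmpty F, eval_C] at hFz
    rw [Subsingleton.elim d 0, hFz] at hd
    exact hd (zero_mem _)
  rw [← hz.span_range] at hd
  have : ((Ideal.span (Set.range z)).map (C (σ := ι))).IsPrime :=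
    hz.span_range ▸ isPrime_map_C ι (maximalIdeal B)
  have hmin := map_C_mem_minimalPrimes_minorsIdeal z i₀ hF hFz hd
  have hheight := Ideal.height_le_card_of_mem_minimalPrimes_span (Set.toFinite _) hmin
  have hcard : ((fun i => X i₀ * C (z i) - X i * C (z i₀)) '' {i₀}ᶜ).ncard < Nat.card ι := by
    refine (Set.ncard_image_le (Set.toFinite _)).trans_lt ?_
    rw [← Set.ncard_univ]
    exact Set.ncard_lt_ncard ⟨Set.subset_univ _, fun h => h (Set.mem_univ i₀) rfl⟩
  rw [hz.span_range] at hheight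
  have := (hz.card_le_height.trans (height_le_height_map_C ι (maximalIdeal B))).trans hheight
  exact hcard.not_ge (by exact_mod_cast this)

theorem isQuasiRegularFamily (hz : IsRegularSystemOfParameters z) :
    IsQuasiRegularFamily (maximalIdeal B) z := fun n F hF hFz d => by
  rw [pow_succ'] at hFz
  nth_rw 2 [← hz.span_range] at hFz
  obtain ⟨G, hG, hGm, hGF⟩ := exists_isHomogeneous_eval_eq_of_mem_mul_span_pow hFz
  have := hz.coeff_mem_of_eval_eq_zero (hF.sub hG) (by simp [hGF]) d
  rw [coeff_sub] at this
  exact (Submodule.sub_mem_iff_left _ (hGm d)).1 this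

lemma exists_sumElim_of_linearIndependent {x : κ → B} (hx : IsRegularSystemOfParameters x)
    {z : ι → maximalIdeal B}
    (hz : LinearIndependent (ResidueField B) ((maximalIdeal B).toCotangent ∘ z)) :
    ∃ (ι' : Type u) (y : ι' → B),
      IsRegularSystemOfParameters (Sum.elim (fun i => (z i : B)) y) := by
  let b := Module.Basis.sumExtend hz
  have := hx.finite
  have : Finite (ι ⊕ Module.Basis.sumExtendIndex hz) := Module.Finite.finite_basis b
  choose y hy using fun j => (maximalIdeal B).toCotangent_surjective (b (Sum.inr j))
  let w : ι ⊕ Module.Basis.sumExtendIndex hz → maximalIdeal B := Sum.elim z y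
  have hw : (maximalIdeal B).toCotangent ∘ w = b := by
    funext j
    rcases j with i | j
    · simp only [Function.comp_apply, b, Module.Basis.sumExtend, Module.Basis.reindex_apply,
        Module.Basis.extend_apply_self]
      rfl
    · exact hy j
  have hval : Sum.elim (fun i => (z i : B)) (fun j => (y j : B)) = fun j => (w j : B) := by
    funext j
    rcases j <;> rfl
  refine ⟨_, fun j => y j, this, ?_, ?_⟩
  · have htop : Submodule.span B (Set.range w) = ⊤ := by
      rw [← CotangentSpace.span_image_eq_top_iff, ← Set.range_comp, ← b.span_eq]
      exact congrArg _ (congrArg _ hw)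
    have := congrArg (Submodule.map (Submodule.subtype (maximalIdeal B))) htop
    rw [Submodule.map_span, ← Set.range_comp, Submodule.map_subtype_top] at this
    rwa [hval]
  · refine le_trans ?_ hx.card_le_height
    rw [← Module.finrank_eq_nat_card_basis b, ← spanFinrank_maximalIdeal_eq_finrank_cotangentSpace,
      ← hx.span_range]
    norm_cast
    refine (Submodule.spanFinrank_span_le_ncard_of_finite (Set.finite_range x)).trans ?_
    rw [← Set.image_univ, ← Set.ncard_univ]
    exact Set.ncard_image_le

theorem isQuasiRegularFamily_of_linearIndependent {x : κ → B} (hx : IsRegularSystemOfParameters x)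
    {z : ι → maximalIdeal B}
    (hz : LinearIndependent (ResidueField B) ((maximalIdeal B).toCotangent ∘ z)) :
    IsQuasiRegularFamily (maximalIdeal B) fun i => (z i : B) := by
  obtain ⟨ι', y, hy⟩ := hx.exists_sumElim_of_linearIndependent hz
  have := hy.isQuasiRegularFamily.comp_injective (Sum.inl_injective (α := ι) (β := ι'))
  rwa [Sum.elim_comp_inl] at this

end IsRegularSystemOfParameters

end RegularSystemOfParameters

section RegularFibre

universe u

lemma isRegularSystemOfParameters_generators (B : Type*) [CommRing B] [IsRegularLocalRing B] :
    IsRegularSystemOfParameters ((↑) : (maximalIdeal B).generators → B) := by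
  have hfg := (maximalIdeal B).fg_of_isNoetherianRing
  refine ⟨Submodule.FG.finite_generators hfg, ?_, ?_⟩
  · rw [Subtype.range_coe]
    exact Submodule.span_generators (maximalIdeal B)
  · rw [Nat.card_coe_set_eq, Submodule.FG.generators_ncard hfg]
    have hdim := (isRegularLocalRing_iff B).1 inferInstance
    rw [← maximalIdeal_height_eq_ringKrullDim] at hdim
    exact_mod_cast hdim.le

lemma IsRegularSystemOfParameters.exists_sumElim_of_isRegularLocalRing_fibre
    {R : Type*} {B : Type u} [CommRing R] [IsLocalRing R] [IsNoetherianRing R] [CommRing B]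
    [IsLocalRing B] [IsNoetherianRing B] [Algebra R B]
    [IsLocalHom (algebraMap R B)] [Module.Flat R B]
    [IsRegularLocalRing (B ⧸ (maximalIdeal R).map (algebraMap R B))]
    {κ : Type*} {x : κ → R} (hx : IsRegularSystemOfParameters x) :
    ∃ (ι : Type u) (y : ι → B),
      IsRegularSystemOfParameters (Sum.elim (algebraMap R B ∘ x) y) := by
  set mB := (maximalIdeal R).map (algebraMap R B)
  have hw := isRegularSystemOfParameters_generators (B ⧸ mB)
  choose y hy using fun w : (maximalIdeal (B ⧸ mB)).generators =>
    Ideal.Quotient.mk_surjective (w : B ⧸ mB)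
  have := hx.finite
  have := hw.finite
  have hmB : mB ≤ maximalIdeal B := map_maximalIdeal_le _
  have hmap : (maximalIdeal B).map (Ideal.Quotient.mk mB) = maximalIdeal (B ⧸ mB) :=
    IsLocalRing.map_maximalIdeal_of_surjective _ Ideal.Quotient.mk_surjective
  refine ⟨_, y, inferInstance, ?_, ?_⟩
  · have hy' : (Ideal.span (Set.range y)).map (Ideal.Quotient.mk mB) = maximalIdeal (B ⧸ mB) := by
      rw [Ideal.map_span, ← Set.range_comp]
      exact (congrArg _ (congrArg _ (funext hy))).trans hw.span_range
    have hx' : Ideal.span (Set.range (algebraMap R B ∘ x)) = mB := by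
      rw [Set.range_comp, ← Ideal.map_span, hx.span_range]
    rw [Set.Sum.elim_range, Ideal.span_union, hx', sup_comm]
    calc Ideal.span (Set.range y) ⊔ mB
        = ((Ideal.span (Set.range y)).map (Ideal.Quotient.mk mB)).comap (Ideal.Quotient.mk mB) := by
          rw [Ideal.comap_map_quotientMk, sup_comm]
      _ = ((maximalIdeal B).map (Ideal.Quotient.mk mB)).comap (Ideal.Quotient.mk mB) := by
          rw [hy', hmap]
      _ = maximalIdeal B := by
          rw [Ideal.comap_map_quotientMk, sup_eq_right.2 hmB]
  · rw [Ideal.height_eq_height_add_of_liesOver_of_hasGoingDown (maximalIdeal R) (maximalIdeal B),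
      hmap, Nat.card_sum, Nat.cast_add]
    exact add_le_add hx.card_le_height hw.card_le_height

end RegularFibre

section PolynomialLocalization

universe u v

lemma isRegularLocalRing_localization_quotient_map {A : Type*} [CommRing A] {I N : Ideal A}
    [N.IsPrime] (hIN : I ≤ N) [IsRegularRing (A ⧸ I)] :
    IsRegularLocalRing
      (Localization.AtPrime N ⧸ I.map (algebraMap A (Localization.AtPrime N))) := by
  have hle : RingHom.ker (algebraMap A (A ⧸ I)) ≤ N := by
    rwa [Ideal.Quotient.algebraMap_eq, Ideal.mk_ker]
  let p := N.map (algebraMap A (A ⧸ I))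
  have : p.IsPrime := Ideal.map_isPrime_of_surjective Ideal.Quotient.mk_surjective hle
  have : p.LiesOver N := ⟨by
    rw [Ideal.under_def, Ideal.comap_map_of_surjective' (algebraMap A (A ⧸ I))
      Ideal.Quotient.mk_surjective, sup_eq_left.2 hle]⟩
  have : IsLocalization p.primeCompl
      (Localization.AtPrime N ⧸ I.map (algebraMap A (Localization.AtPrime N))) := by
    rw [← Ideal.algebraMapSubmonoid_primeCompl_of_liesOver_surjective p N
      Ideal.Quotient.mk_surjective]
    infer_instance
  exact IsRegularLocalRing.of_ringEquiv (IsLocalization.algEquiv p.primeCompl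
    (Localization.AtPrime p)
    (Localization.AtPrime N ⧸ I.map (algebraMap A (Localization.AtPrime N)))).toRingEquiv

theorem IsRegularSystemOfParameters.exists_sumElim_localization {R : Type u} {σ : Type v}
    [CommRing R] [IsLocalRing R] [IsNoetherianRing R] [Finite σ] (N : Ideal (MvPolynomial σ R))
    [N.IsPrime] {κ : Type*} {x : κ → R} (hx : IsRegularSystemOfParameters x)
    (hN : N.comap C = maximalIdeal R) :
    ∃ (ι : Type max u v) (y : ι → Localization.AtPrime N), IsRegularSystemOfParameters
      (Sum.elim (algebraMap R (Localization.AtPrime N) ∘ x) y) := by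
  have : Module.Flat R (Localization.AtPrime N) := Module.Flat.trans R (MvPolynomial σ R) _
  have : IsLocalHom (algebraMap R (Localization.AtPrime N)) := by
    refine ((local_hom_TFAE _).out 0 4).2 ?_
    rw [IsScalarTower.algebraMap_eq R (MvPolynomial σ R), ← Ideal.comap_comap, ← hN]
    congr 1
    exact IsLocalization.AtPrime.under_maximalIdeal _ N
  have : IsRegularRing (MvPolynomial σ (R ⧸ maximalIdeal R)) :=
    inferInstanceAs (IsRegularRing (MvPolynomial σ (ResidueField R)))
  have : IsRegularRing (MvPolynomial σ R ⧸ (maximalIdeal R).map (C (σ := σ))) :=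
    IsRegularRing.of_ringEquiv
      (quotientEquivQuotientMvPolynomial (σ := σ) (maximalIdeal R)).toRingEquiv
  have := isRegularLocalRing_localization_quotient_map
    (Ideal.map_le_iff_le_comap.2 hN.ge : (maximalIdeal R).map C ≤ N)
  rw [Ideal.map_map] at this
  have : IsRegularLocalRing (Localization.AtPrime N ⧸
    (maximalIdeal R).map (algebraMap R (Localization.AtPrime N))) := this
  exact hx.exists_sumElim_of_isRegularLocalRing_fibre

end PolynomialLocalization

section LinearIndependentCotangent

variable {A B ι : Type*} [CommRing A] [CommRing B]

lemma linearIndependent_toCotangent_comap {φ : A →+* B} {J : Ideal B} {z : ι → J.comap φ}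
    (h : LinearIndependent (B ⧸ J) (J.toCotangent ∘ fun i => ⟨φ (z i), (z i).2⟩)) :
    LinearIndependent (A ⧸ J.comap φ) ((J.comap φ).toCotangent ∘ z) := by
  rw [linearIndependent_toCotangent_iff] at h ⊢
  intro s c hc i hi
  refine h s (fun i => φ (c i)) ?_ i hi
  have := Ideal.le_comap_pow φ 2 hc
  rwa [Ideal.mem_comap, map_sum, Finset.sum_congr rfl fun i _ => map_mul φ _ _] at this

lemma linearIndependent_toCotangent_localization {m : Ideal A} [m.IsPrime] {z : ι → m}
    (h : LinearIndependent (A ⧸ m) (m.toCotangent ∘ z))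
    {w : ι → maximalIdeal (Localization.AtPrime m)}
    (hw : ∀ i, (w i : Localization.AtPrime m) = algebraMap A _ (z i)) :
    LinearIndependent (ResidueField (Localization.AtPrime m))
      ((maximalIdeal (Localization.AtPrime m)).toCotangent ∘ w) := by
  refine linearIndependent_toCotangent_iff.2 fun s c hc i hi => ?_
  rw [linearIndependent_toCotangent_iff] at h
  obtain ⟨b, hb⟩ := IsLocalization.exist_integer_multiples m.primeCompl s c
  choose! d hd using hb
  have hsum : algebraMap A (Localization.AtPrime m) (∑ i ∈ s, d i * z i) =
      algebraMap A _ (b : A) * ∑ i ∈ s, c i * w i := by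
    rw [map_sum, Finset.mul_sum]
    refine Finset.sum_congr rfl fun j hj => ?_
    rw [map_mul, hd j hj, Algebra.smul_def, mul_assoc, hw]
  have hmem := hsum ▸ Ideal.mul_mem_left _ (algebraMap A _ (b : A)) hc
  rw [← Localization.AtPrime.map_eq_maximalIdeal, ← Ideal.map_pow,
    IsLocalization.algebraMap_mem_map_algebraMap_iff m.primeCompl] at hmem
  obtain ⟨u, hu, hmem⟩ := hmem
  simp_rw [Finset.mul_sum, ← mul_assoc] at hmem
  have hdi : d i ∈ m :=
    (Ideal.IsPrime.mem_or_mem ‹_› (h s (fun i => u * d i) hmem i hi)).resolve_left hu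
  rw [← IsLocalization.AtPrime.to_map_mem_maximal_iff (Localization.AtPrime m) m, hd i hi,
    Algebra.smul_def] at hdi
  exact (Ideal.unit_mul_mem_iff_mem _ (IsLocalization.map_units _ b)).1 hdi

end LinearIndependentCotangent

section Descent

open Filter hiding map

variable {R W ι : Type*} [CommRing R]

lemma eventually_mem_range_rename (f : MvPolynomial W R) :
    ∀ᶠ S : Finset W in atTop, ∃ g : MvPolynomial S R, rename Subtype.val g = f := by
  filter_upwards [eventually_ge_atTop f.vars] with S hS
  have : f ∈ supported R (S : Set W) := mem_supported.2 hS
  rwa [supported_eq_range_rename] at this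

lemma eventually_mem_image_rename_pow {I : Ideal (MvPolynomial W R)} {k : ℕ}
    {f : MvPolynomial W R} (hf : f ∈ I ^ k) :
    ∀ᶠ S : Finset W in atTop, ∃ g ∈ (I.comap (rename (R := R) (Subtype.val : S → W))) ^ k,
      rename Subtype.val g = f := by
  induction hf using Submodule.pow_induction_on_left' with
  | algebraMap f => simpa using eventually_mem_range_rename f
  | add f₁ f₂ k _ _ h₁ h₂ =>
    filter_upwards [h₁, h₂] with S ⟨g₁, hg₁, hf₁⟩ ⟨g₂, hg₂, hf₂⟩
    exact ⟨g₁ + g₂, add_mem hg₁ hg₂, by rw [map_add, hf₁, hf₂]⟩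
  | mem_mul f₁ hf₁ k f₂ _ h₂ =>
    filter_upwards [eventually_mem_range_rename f₁, h₂] with S ⟨g₁, hg₁⟩ ⟨g₂, hg₂, hf₂⟩
    refine ⟨g₁ * g₂, ?_, by rw [map_mul, hg₁, hf₂]⟩
    rw [pow_succ']
    exact Ideal.mul_mem_mul (by rwa [Ideal.mem_comap, hg₁]) hg₂

/-- Quasi-regularity may be tested in the polynomial rings in finitely many of the variables, which
are Noetherian when `R` is. -/
lemma IsQuasiRegularFamily.of_rename [Finite ι] {I : Ideal (MvPolynomial W R)}
    {z : ι → MvPolynomial W R}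
    (h : ∀ (S : Finset W) (y : ι → MvPolynomial S R), (∀ i, rename Subtype.val (y i) = z i) →
      IsQuasiRegularFamily (I.comap (rename (R := R) (Subtype.val : S → W))) y) :
    IsQuasiRegularFamily I z := fun n F hF hFz d => by
  have hcoeff : ∀ᶠ S : Finset W in atTop, ∀ d ∈ F.support,
      ∃ g : MvPolynomial S R, rename Subtype.val g = coeff d F :=
    (eventually_all_finset _).2 fun d _ => eventually_mem_range_rename _
  obtain ⟨S, ⟨g, hg, hgF⟩, hzS, hFS⟩ := ((eventually_mem_image_rename_pow hFz).and
    ((eventually_all.2 fun i => eventually_mem_range_rename (z i)).and hcoeff)).exists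
  choose y hy using hzS
  let φ : MvPolynomial S R →+* MvPolynomial W R := (rename Subtype.val).toRingHom
  have hφ : Function.Injective φ := rename_injective _ Subtype.val_injective
  obtain ⟨G, rfl⟩ : F ∈ Set.range (map φ) := by
    rw [mem_range_map_iff_coeffs_subset]
    intro c hc
    obtain ⟨d, hd, rfl⟩ := mem_coeffs_iff.1 hc
    exact hFS d hd
  have hG : G.IsHomogeneous n := fun d hd => hF (by rwa [coeff_map, map_ne_zero_iff φ hφ])
  have heval : eval y G = g := by
    apply hφ
    rw [map_eval]
    exact (congrArg (eval · (map φ G)) (funext hy)).trans hgF.symm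
  rw [coeff_map]
  exact h S y hy n G hG (heval ▸ hg) d

end Descent

section PolynomialRing

lemma comap_comap_rename_C {R W : Type*} [CommRing R] (m : Ideal (MvPolynomial W R))
    (S : Finset W) :
    (m.comap (rename (R := R) (Subtype.val : S → W))).comap C = m.comap C := by
  ext r
  simp

variable {R : Type*} [CommRing R] [IsLocalRing R] [IsNoetherianRing R] {κ : Type*} {x : κ → R}
  {W : Type*} {m : Ideal (MvPolynomial W R)} [m.IsPrime]

namespace IsRegularSystemOfParameters

lemma isQuasiRegularFamily_C_comp (hx : IsRegularSystemOfParameters x)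
    (hm : m.comap C = maximalIdeal R) :
    IsQuasiRegularFamily m (C ∘ x : κ → MvPolynomial W R) := by
  have := hx.finite
  refine .of_rename fun S y hy => ?_
  set N := m.comap (rename (R := R) (Subtype.val : S → W))
  obtain rfl : y = C ∘ x := funext fun i =>
    rename_injective _ Subtype.val_injective (by simpa using hy i)
  obtain ⟨ι, w, hw⟩ := hx.exists_sumElim_localization N ((comap_comap_rename_C m S).trans hm)
  have hCx := hw.isQuasiRegularFamily.comp_injective (Sum.inl_injective (α := κ) (β := ι))
  rw [Sum.elim_comp_inl, IsScalarTower.algebraMap_eq R (MvPolynomial S R)] at hCx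
  rw [← IsLocalization.AtPrime.under_maximalIdeal (Localization.AtPrime N) N]
  exact .comap _ hCx

lemma isQuasiRegularFamily_mvPolynomial_of_linearIndependent
    (hx : IsRegularSystemOfParameters x) (hm : m.comap C = maximalIdeal R) {ι : Type*}
    {z : ι → m} (hz : LinearIndependent (MvPolynomial W R ⧸ m) (m.toCotangent ∘ z)) :
    IsQuasiRegularFamily m fun i => (z i : MvPolynomial W R) := by
  refine .of_finite_subfamilies fun T => .of_rename fun S y hy => ?_
  set N := m.comap (rename (R := R) (Subtype.val : S → W))
  let y' : T → N := fun i => ⟨y i, by rw [Ideal.mem_comap, hy i]; exact (z i).2⟩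
  have hind : LinearIndependent (MvPolynomial S R ⧸ N) (N.toCotangent ∘ y') := by
    refine linearIndependent_toCotangent_comap ?_
    convert hz.comp (Subtype.val : T → ι) Subtype.val_injective using 1
    exact funext fun i => congrArg m.toCotangent (Subtype.ext (hy i))
  obtain ⟨_, _, hw⟩ := hx.exists_sumElim_localization N ((comap_comap_rename_C m S).trans hm)
  let w : T → maximalIdeal (Localization.AtPrime N) := fun i => ⟨algebraMap _ _ (y i),
    (IsLocalization.AtPrime.to_map_mem_maximal_iff (Localization.AtPrime N) N _).2 (y' i).2⟩
  have := hw.isQuasiRegularFamily_of_linearIndependent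
    (linearIndependent_toCotangent_localization hind (w := w) fun _ => rfl)
  rw [← IsLocalization.AtPrime.under_maximalIdeal (Localization.AtPrime N) N]
  exact .comap _ this

theorem mem_pow_of_C_mem_pow (hx : IsRegularSystemOfParameters x)
    (hm : m.comap C = maximalIdeal R) {n : ℕ} {f : R} (hf : C f ∈ m ^ n) :
    f ∈ maximalIdeal R ^ n := by
  induction n with
  | zero => simp
  | succ n ih =>
    have hfn := ih (Ideal.pow_le_pow_right n.le_succ hf)
    rw [← hx.span_range, Ideal.mem_span_pow_iff_exists_isHomogeneous] at hfn
    obtain ⟨F, hF, rfl⟩ := hfn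
    rw [pow_succ']
    refine eval_mem_mul_pow (fun i => hx.span_range ▸ Ideal.subset_span ⟨i, rfl⟩)
      (mem_pow_idealOfVars_of_isHomogeneous hF) fun d => ?_
    rw [map_eval] at hf
    have := hx.isQuasiRegularFamily_C_comp hm n (map C F) (hF.map C) hf d
    rwa [coeff_map, ← Ideal.mem_comap, hm] at this

end IsRegularSystemOfParameters

end PolynomialRing

section IdealSup

variable {A : Type*} [CommRing A] {m I I' J J' : Ideal A}

lemma mul_le_mul_sup_mul (hI' : I' ≤ I) (hI : I ≤ I' ⊔ m * I) (hJ : J ≤ J' ⊔ m * J) :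
    I * J ≤ I' * J' ⊔ m * (I * J) :=
  calc I * J ≤ (I' ⊔ m * I) * J := Ideal.mul_mono_left hI
    _ = I' * J ⊔ m * (I * J) := by rw [Ideal.sup_mul, mul_assoc]
    _ ≤ I' * (J' ⊔ m * J) ⊔ m * (I * J) := sup_le_sup_right (Ideal.mul_mono_right hJ) _
    _ = I' * J' ⊔ (m * (I' * J) ⊔ m * (I * J)) := by
      rw [Ideal.mul_sup, mul_left_comm, sup_assoc]
    _ = I' * J' ⊔ m * (I * J) := by
      rw [sup_eq_right.2 (Ideal.mul_mono_right (Ideal.mul_mono_left hI'))]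

lemma pow_le_pow_sup_mul (hI' : I' ≤ I) (hI : I ≤ I' ⊔ m * I) (n : ℕ) :
    I ^ n ≤ I' ^ n ⊔ m * I ^ n := by
  induction n with
  | zero => simp
  | succ n ih =>
    simp_rw [pow_succ']
    exact mul_le_mul_sup_mul hI' hI ih

end IdealSup

section Forms

variable {A ι : Type*} [CommRing A]

open Classical in
lemma le_degree_filter_of_mem_pow_span_X_image {T : Set ι} {j : ℕ} {F : MvPolynomial ι A}
    (hF : F ∈ Ideal.span (X '' T) ^ j) {d : ι →₀ ℕ} (hd : d ∈ F.support) :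
    j ≤ (d.filter (· ∈ T)).degree := by
  induction hF using Submodule.pow_induction_on_left' generalizing d with
  | algebraMap => exact Nat.zero_le _
  | add F G j _ _ hF hG =>
    exact (Finset.mem_union.1 (support_add hd)).elim (hF ·) (hG ·)
  | mem_mul F hF j G _ hG =>
    obtain ⟨d₁, hd₁, d₂, hd₂, rfl⟩ := Finset.mem_add.1 (support_mul F G hd)
    obtain ⟨i, hi, hdi⟩ := mem_ideal_span_X_image.1 hF d₁ hd₁
    have h₁ : 1 ≤ (d₁.filter (· ∈ T)).degree := by
      refine (Nat.one_le_iff_ne_zero.2 ?_).trans (Finsupp.le_degree i _)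
      rwa [Finsupp.filter_apply_pos (· ∈ T) _ hi]
    rw [Finsupp.filter_add, map_add, add_comm]
    exact add_le_add (hG hd₂) h₁

open Classical in
lemma prod_pow_mem_pow_mul_pow {m Q : Ideal A} {T : Set ι} {z : ι → A} (hm : ∀ i, z i ∈ m)
    (hQ : ∀ i ∈ T, z i ∈ Q) (hQm : Q ≤ m) {j k : ℕ} {d : ι →₀ ℕ}
    (hj : j ≤ (d.filter (· ∈ T)).degree) (hjk : j + k ≤ d.degree) :
    (d.prod fun i e => z i ^ e) ∈ Q ^ j * m ^ k := by
  have hprod {I : Ideal A} {d : ι →₀ ℕ} (h : ∀ i ∈ d.support, z i ∈ I) :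
      (d.prod fun i e => z i ^ e) ∈ I ^ d.degree := by
    rw [Finsupp.degree_apply, ← Finset.prod_pow_eq_pow_sum]
    exact Ideal.prod_mem_prod fun i hi => Ideal.pow_mem_pow (h i hi) _
  have hsum := congrArg Finsupp.degree (d.filter_add_filter_not (· ∈ T))
  obtain ⟨l, hl⟩ := Nat.exists_eq_add_of_le hj
  rw [map_add, hl] at hsum
  have hT : ((d.filter (· ∈ T)).prod fun i e => z i ^ e) ∈ Q ^ j * m ^ l := by
    have := hprod (I := Q) (d := d.filter (· ∈ T)) fun i hi => hQ i (Finset.mem_filter.1 hi).2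
    rw [hl, pow_add] at this
    exact Ideal.mul_mono_right (Ideal.pow_right_mono hQm l) this
  have := Ideal.mul_mem_mul hT (hprod (I := m) (d := d.filter (· ∉ T)) fun i _ => hm i)
  rw [Finsupp.prod_filter_mul_prod_filter_not, mul_assoc, ← pow_add] at this
  exact Ideal.mul_mono_right (Ideal.pow_le_pow_right (by lia)) this

end Forms

section Cancellation

variable {A ι : Type*} [CommRing A]

lemma span_X_image_pow_mul_le (T : Set ι) (j k : ℕ) :
    Ideal.span (X '' T) ^ j * idealOfVars ι A ^ k ≤ idealOfVars ι A ^ (j + k) := by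
  rw [pow_add]
  exact Ideal.mul_mono_left
    (Ideal.pow_right_mono (Ideal.span_mono (Set.image_subset_range X T)) j)

/-- A quasi-regular family adapted to a pair of ideals `Q ≤ m`: it generates `m` modulo `m²`, and
its members indexed by `T` generate `Q` modulo `m Q`.  In the associated graded ring of `m`, a
polynomial ring over `A ⧸ m`, the initial forms of the elements of `Q` then form the ideal
generated by the variables indexed by `T`. -/
structure IsAdaptedFamily (m Q : Ideal A) (T : Set ι) (z : ι → A) : Prop where
  isQuasiRegularFamily : IsQuasiRegularFamily m z
  le : Q ≤ m
  mem : ∀ i, z i ∈ m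
  mem_of_mem : ∀ i ∈ T, z i ∈ Q
  le_span_range_sup : m ≤ Ideal.span (Set.range z) ⊔ m * m
  le_span_image_sup : Q ≤ Ideal.span (z '' T) ⊔ m * Q

namespace IsAdaptedFamily

variable {m Q : Ideal A} {T : Set ι} {z : ι → A}

lemma pow_mul_pow_le (h : IsAdaptedFamily m Q T z) (j k : ℕ) : Q ^ j * m ^ k ≤ m ^ (j + k) := by
  rw [pow_add]
  exact Ideal.mul_mono_left (Ideal.pow_right_mono h.le j)

lemma exists_sub_eval_mem (h : IsAdaptedFamily m Q T z) {j k : ℕ} {u : A}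
    (hu : u ∈ Q ^ j * m ^ k) :
    ∃ F ∈ Ideal.span (X '' T) ^ j * idealOfVars ι A ^ k, u - eval z F ∈ Q ^ j * m ^ (k + 1) := by
  have hm : m ≤ (idealOfVars ι A).map (eval z) ⊔ m * m := by
    rw [idealOfVars, Ideal.map_span, ← Set.range_comp]
    simpa only [Function.comp_def, eval_X] using h.le_span_range_sup
  have hQ : Q ≤ (Ideal.span (X '' T)).map (eval z) ⊔ m * Q := by
    rw [Ideal.map_span, Set.image_image]
    simpa only [eval_X] using h.le_span_image_sup
  have hQ' : (Ideal.span (X '' T)).map (eval z) ≤ Q := by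
    rw [Ideal.map_span, Set.image_image, Ideal.span_le]
    rintro _ ⟨i, hi, rfl⟩
    simpa using h.mem_of_mem i hi
  have hm' : (idealOfVars ι A).map (eval z) ≤ m := by
    rw [idealOfVars, Ideal.map_span, Ideal.span_le]
    rintro _ ⟨_, ⟨i, rfl⟩, rfl⟩
    simpa using h.mem i
  have hle := mul_le_mul_sup_mul (Ideal.pow_right_mono hQ' j) (pow_le_pow_sup_mul hQ' hQ j)
    (pow_le_pow_sup_mul hm' hm k)
  rw [← Ideal.map_pow, ← Ideal.map_pow, ← Ideal.map_mul] at hle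
  obtain ⟨y, hy, w, hw, rfl⟩ := Submodule.mem_sup.1 (hle hu)
  obtain ⟨F, hF, rfl⟩ := (Ideal.mem_map_iff_of_surjective (eval z) fun a => ⟨C a, eval_C a⟩).1 hy
  refine ⟨F, hF, ?_⟩
  rwa [add_sub_cancel_left, pow_succ', mul_left_comm]

lemma mem_pow_mul_pow_of_mem_pow (h : IsAdaptedFamily m Q T z) {j k : ℕ} {u : A} (huQ : u ∈ Q ^ j)
    (hum : u ∈ m ^ (j + k)) : u ∈ Q ^ j * m ^ k := by
  classical
  induction k with
  | zero => simpa using huQ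
  | succ k ih =>
    obtain ⟨F, hF, huF⟩ := h.exists_sub_eval_mem (ih (Ideal.pow_le_pow_right (by lia) hum))
    have hFT (d) (hd : d ∈ F.support) : j ≤ (d.filter (· ∈ T)).degree :=
      le_degree_filter_of_mem_pow_span_X_image (Ideal.mul_le_left hF) hd
    have hFn := span_X_image_pow_mul_le T j k hF
    have hFz : eval z F ∈ m ^ (j + k + 1) := by
      have := sub_mem hum (h.pow_mul_pow_le j (k + 1) huF)
      rwa [sub_sub_cancel] at this
    rw [← sub_add_cancel u (eval z F), eval_eq]
    refine add_mem huF (sum_mem fun d hd => ?_)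
    rcases ((mem_pow_idealOfVars_iff _ F).1 hFn d hd).eq_or_lt with hdeg | hdeg
    · have hprod := prod_pow_mem_pow_mul_pow h.mem h.mem_of_mem h.le (hFT d hd) hdeg.le
      have := Ideal.mul_mem_mul
        (h.isQuasiRegularFamily.coeff_mem h.mem hFn hFz hdeg.symm) hprod
      rwa [mul_left_comm, ← pow_succ'] at this
    · exact Ideal.mul_mem_left _ _
        (prod_pow_mem_pow_mul_pow h.mem h.mem_of_mem h.le (hFT d hd) hdeg)

open Classical in
lemma coeff_mem_of_mul_mem (h : IsAdaptedFamily m Q T z) {i : ι} (hi : i ∉ T) {j r : ℕ}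
    (hjr : j ≤ r + 1) {F : MvPolynomial ι A} (hF : F ∈ idealOfVars ι A ^ r)
    (hFz : z i * eval z F ∈ Q ^ j ⊔ m ^ (r + 2)) {d : ι →₀ ℕ} (hd : d.degree = r)
    (hdj : (d.filter (· ∈ T)).degree < j) : coeff d F ∈ m := by
  obtain ⟨k, hk⟩ := Nat.exists_eq_add_of_le hjr
  obtain ⟨u, hu, v, hv, huv⟩ := Submodule.mem_sup.1 hFz
  have hum : u ∈ m ^ (j + k) := by
    have hzF := Ideal.mul_mem_mul (h.mem i) (eval_mem_pow h.mem hF)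
    rw [← pow_succ'] at hzF
    rw [← hk, eq_sub_of_add_eq huv]
    exact sub_mem hzF (Ideal.pow_le_pow_right (Nat.le_succ _) hv)
  obtain ⟨G, hG, huG⟩ := h.exists_sub_eval_mem (h.mem_pow_mul_pow_of_mem_pow hu hum)
  have hXF : X i * F - G ∈ idealOfVars ι A ^ (r + 1) := by
    refine sub_mem ?_ (hk ▸ span_X_image_pow_mul_le T j k hG)
    rw [pow_succ']
    exact Ideal.mul_mem_mul (Ideal.subset_span ⟨i, rfl⟩) hF
  have heval : eval z (X i * F - G) ∈ m ^ (r + 1 + 1) := by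
    have huG' := h.pow_mul_pow_le j (k + 1) huG
    rw [← add_assoc, ← hk] at huG'
    convert add_mem huG' hv using 1
    rw [map_sub, map_mul, eval_X, ← huv]
    ring
  have hcoeff := h.isQuasiRegularFamily.coeff_mem h.mem hXF heval
    (d := Finsupp.single i 1 + d) (by rw [map_add, Finsupp.degree_single, hd, add_comm])
  have hG0 : coeff (Finsupp.single i 1 + d) G = 0 := by
    by_contra hne
    have := le_degree_filter_of_mem_pow_span_X_image (Ideal.mul_le_left hG) (mem_support_iff.2 hne)
    rw [Finsupp.filter_add, Finsupp.filter_single_of_neg (· ∈ T) hi, zero_add] at this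
    exact hdj.not_ge this
  rwa [coeff_sub, hG0, sub_zero, coeff_X_mul] at hcoeff

lemma mem_sup_of_mul_mem_sup_succ (h : IsAdaptedFamily m Q T z) {i : ι} (hi : i ∉ T) {j r : ℕ}
    (hjr : j ≤ r + 1) {g : A} (hg : g ∈ m ^ r) (hig : z i * g ∈ Q ^ j ⊔ m ^ (r + 2)) :
    g ∈ Q ^ j ⊔ m ^ (r + 1) := by
  classical
  obtain ⟨F, hF, hgF⟩ := h.exists_sub_eval_mem (j := 0) (k := r) (by simpa using hg)
  rw [pow_zero, one_mul] at hF hgF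
  have hFz : z i * eval z F ∈ Q ^ j ⊔ m ^ (r + 2) := by
    have := Ideal.mem_sup_right (S := Q ^ j) (Ideal.mul_mem_mul (h.mem i) hgF)
    rw [← pow_succ'] at this
    have := sub_mem hig this
    rwa [← mul_sub, sub_sub_cancel] at this
  rw [← sub_add_cancel g (eval z F), eval_eq]
  refine add_mem (Ideal.mem_sup_right hgF) (sum_mem fun d hd => ?_)
  have hdr := (mem_pow_idealOfVars_iff r F).1 hF d hd
  have hprod {j k : ℕ} :=
    prod_pow_mem_pow_mul_pow (d := d) (j := j) (k := k) h.mem h.mem_of_mem h.le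
  rcases le_or_gt j (d.filter (· ∈ T)).degree with hdj | hdj
  · have hsum := congrArg Finsupp.degree (d.filter_add_filter_not (· ∈ T))
    rw [map_add] at hsum
    have := hprod (k := 0) hdj (by lia)
    rw [pow_zero, mul_one] at this
    exact Ideal.mem_sup_left (Ideal.mul_mem_left _ _ this)
  refine Ideal.mem_sup_right ?_
  rcases hdr.eq_or_lt with hdr | hdr
  · have := Ideal.mul_mem_mul (h.coeff_mem_of_mul_mem hi hjr hF hFz hdr.symm hdj)
      (hprod (j := 0) (k := r) (Nat.zero_le _) (by lia))
    rwa [pow_zero, one_mul, ← pow_succ'] at this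
  · have := hprod (j := 0) (k := r + 1) (Nat.zero_le _) (by lia)
    rw [pow_zero, one_mul] at this
    exact Ideal.mul_mem_left _ _ this

lemma mem_sup_of_mul_mem_sup (h : IsAdaptedFamily m Q T z) {i : ι} (hi : i ∉ T) {j k : ℕ} {g : A}
    (hig : z i * g ∈ Q ^ j ⊔ m ^ (k + 1)) : g ∈ Q ^ j ⊔ m ^ k := by
  suffices ∀ r ≤ k, g ∈ Q ^ j ⊔ m ^ r from this k le_rfl
  intro r hrk
  induction r with
  | zero => simp
  | succ r ih =>
    obtain ⟨u, hu, v, hv, rfl⟩ := Submodule.mem_sup.1 (ih (by lia))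
    refine add_mem (Ideal.mem_sup_left hu) ?_
    have hiv : z i * v ∈ Q ^ j ⊔ m ^ (r + 2) := by
      have hle : m ^ (k + 1) ≤ m ^ (r + 2) := Ideal.pow_le_pow_right (by lia)
      have := sub_mem (sup_le_sup_left hle (Q ^ j) hig)
        (Ideal.mem_sup_left (Ideal.mul_mem_left _ (z i) hu))
      rwa [← mul_sub, add_sub_cancel_left] at this
    rcases le_or_gt j (r + 1) with hjr | hjr
    · exact h.mem_sup_of_mul_mem_sup_succ hi hjr hv hiv
    · have hle : Q ^ j ≤ Q ^ (r + 1) := Ideal.pow_le_pow_right hjr.le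
      have := h.mem_sup_of_mul_mem_sup_succ hi le_rfl hv (sup_le_sup_right hle (m ^ (r + 2)) hiv)
      exact Ideal.mem_sup_right (sup_le (Ideal.pow_right_mono h.le _) le_rfl this)

lemma mem_sup_of_pow_mul_mem_sup (h : IsAdaptedFamily m Q T z) {i : ι} (hi : i ∉ T) {a j k : ℕ}
    {g : A} (hig : z i ^ a * g ∈ Q ^ j ⊔ m ^ (k + a)) : g ∈ Q ^ j ⊔ m ^ k := by
  induction a with
  | zero => simpa using hig
  | succ a ih =>
    rw [pow_succ', mul_assoc] at hig
    exact ih (h.mem_sup_of_mul_mem_sup hi hig)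

theorem mem_pow_of_mul_mem_pow (h : IsAdaptedFamily m Q T z) {i : ι} (hi : i ∉ T) {a n : ℕ}
    {f s : A} (hs : s - z i ^ a ∈ Q) (hsf : s * f ∈ Q ^ n) : f ∈ m ^ n := by
  -- Dividing by `z i ^ a`, once for each factor of `Q`, costs `a` in the exponent of `m`.
  suffices ∀ j ≤ n, f ∈ Q ^ j ⊔ m ^ (n + (n - j) * a) by
    have := this n le_rfl
    rw [Nat.sub_self, zero_mul, add_zero] at this
    exact sup_le (Ideal.pow_right_mono h.le n) le_rfl this
  intro j hjn
  induction j with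
  | zero => simp
  | succ j ih =>
    refine h.mem_sup_of_pow_mul_mem_sup hi (a := a) ?_
    obtain ⟨u, hu, v, hv, rfl⟩ := Submodule.mem_sup.1 (ih (by lia))
    have hexp : n + (n - (j + 1)) * a + a = n + (n - j) * a := by
      rw [show n - j = n - (j + 1) + 1 by lia, add_one_mul, add_assoc]
    rw [hexp, show z i ^ a * (u + v) =
      s * (u + v) - (s - z i ^ a) * u - (s - z i ^ a) * v by ring]
    refine sub_mem (sub_mem ?_ ?_) (Ideal.mem_sup_right (Ideal.mul_mem_left _ _ hv))
    · exact Ideal.mem_sup_left (Ideal.pow_le_pow_right hjn hsf)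
    · exact Ideal.mem_sup_left (pow_succ' Q j ▸ Ideal.mul_mem_mul hs hu)

end IsAdaptedFamily

end Cancellation

section CotangentSpace

universe u

lemma toCotangent_mem_span_range_iff {A ι : Type*} [CommRing A] {m : Ideal A} {z : ι → m} {x : m} :
    m.toCotangent x ∈ Submodule.span (A ⧸ m) (Set.range (m.toCotangent ∘ z)) ↔
      (x : A) ∈ Ideal.span (Set.range fun i => (z i : A)) ⊔ m ^ 2 := by
  have hspan : Ideal.span (Set.range fun i => (z i : A)) =
      (Submodule.span A (Set.range z)).map m.subtype := by
    rw [Submodule.map_span, ← Set.range_comp]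
    rfl
  rw [← Submodule.restrictScalars_mem A, Submodule.restrictScalars_span A (A ⧸ m)
    Ideal.Quotient.mk_surjective, Set.range_comp, ← Submodule.map_span, hspan]
  constructor
  · rintro ⟨y, hy, hyx⟩
    rw [← sub_add_cancel (x : A) y]
    refine add_mem (Ideal.mem_sup_right ?_) (Ideal.mem_sup_left ⟨y, hy, rfl⟩)
    exact (Ideal.toCotangent_eq m).1 hyx.symm
  · intro hx
    obtain ⟨_, ⟨y, hy, rfl⟩, v, hv, hyv⟩ := Submodule.mem_sup.1 hx
    refine ⟨y, hy, (Ideal.toCotangent_eq m).2 ?_⟩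
    rw [← hyv, m.subtype_apply, sub_add_cancel_left]
    exact neg_mem hv

/-- If `Q` meets `m²` in `m Q`, a basis of the image of `Q` in the cotangent space of `m` lifts to
generators of `Q` modulo `m Q`, and any `τ ∉ Q + m²` extends it. -/
theorem exists_isAdaptedFamily {A : Type u} [CommRing A] {m Q : Ideal A} [m.IsMaximal]
    (hqr : ∀ {ι : Type u} (z : ι → m), LinearIndependent (A ⧸ m) (m.toCotangent ∘ z) →
      IsQuasiRegularFamily m fun i => (z i : A))
    {τ : A} (hm : m = Q ⊔ Ideal.span {τ}) (hQ : Q ⊓ m ^ 2 ≤ m * Q) (hτ : τ ∉ Q ⊔ m ^ 2) :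
    ∃ (ι : Type u) (T : Set ι) (z : ι → A) (i : ι), IsAdaptedFamily m Q T z ∧ i ∉ T ∧ z i = τ := by
  let := Ideal.Quotient.field m
  have hQm : Q ≤ m := hm ▸ le_sup_left
  have hτm : τ ∈ m := hm ▸ Ideal.mem_sup_right (Ideal.mem_span_singleton_self τ)
  obtain ⟨κ, b, -, hspan, hb⟩ :=
    exists_linearIndependent' (A ⧸ m) (m.toCotangent ∘ Submodule.inclusion hQm)
  have hbQ : Ideal.span (Set.range fun k => (b k : A)) ≤ Q :=
    Ideal.span_le.2 (Set.range_subset_iff.2 fun k => (b k).2)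
  have hQb : Q ≤ Ideal.span (Set.range fun k => (b k : A)) ⊔ m * Q := by
    intro q hq
    have hmem := Submodule.subset_span (R := A ⧸ m)
      (Set.mem_range_self (f := m.toCotangent ∘ Submodule.inclusion hQm) ⟨q, hq⟩)
    rw [← hspan] at hmem
    obtain ⟨u, hu, v, hv, rfl⟩ := Submodule.mem_sup.1 (toCotangent_mem_span_range_iff.1 hmem)
    exact add_mem (Ideal.mem_sup_left hu)
      (Ideal.mem_sup_right (hQ ⟨(add_mem_cancel_left (hbQ hu)).1 hq, hv⟩))
  let z : Option κ → m := fun o => o.elim ⟨τ, hτm⟩ fun k => Submodule.inclusion hQm (b k)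
  have hz : LinearIndependent (A ⧸ m) (m.toCotangent ∘ z) := by
    refine linearIndependent_option.2 ⟨hb, fun hmem => hτ ?_⟩
    have := toCotangent_mem_span_range_iff (z := Submodule.inclusion hQm ∘ b).1 hmem
    exact sup_le_sup_right hbQ _ this
  refine ⟨Option κ, Set.range some, fun o => z o, none,
    ⟨hqr z hz, hQm, fun o => (z o).2, ?_, ?_, ?_⟩, by simp, rfl⟩
  · rintro _ ⟨k, rfl⟩
    exact (b k).2
  · refine hm.le.trans (sup_le (hQb.trans (sup_le_sup ?_ (Ideal.mul_mono_right hQm))) ?_)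
    · exact Ideal.span_mono (Set.range_subset_iff.2 fun k => ⟨some k, rfl⟩)
    · exact (Ideal.span_singleton_le_iff_mem _).2
        (Ideal.mem_sup_left (Ideal.subset_span ⟨none, rfl⟩))
  · rw [← Set.range_comp]
    exact hQb

end CotangentSpace

section ResidueSurjection

variable {A W : Type*} [CommRing A] [CommRing W]

lemma sq_sup_span_singleton_le (Q : Ideal A) (τ : A) :
    (Q ⊔ Ideal.span {τ}) ^ 2 ≤ (Q ⊔ Ideal.span {τ}) * Q ⊔ Ideal.span {τ ^ 2} := by
  rw [sq, Ideal.mul_sup, Ideal.sup_mul _ _ (Ideal.span {τ}),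
    Ideal.span_singleton_mul_span_singleton, ← sq, mul_comm Q (Ideal.span {τ})]
  exact sup_le le_sup_left (sup_le_sup_right (Ideal.mul_mono_left le_sup_right) _)

variable [IsLocalRing W] {π : A →+* W} {τ : A}

lemma comap_maximalIdeal_eq_ker_sup_span (hπ : Function.Surjective π)
    (hτ : maximalIdeal W = Ideal.span {π τ}) :
    (maximalIdeal W).comap π = RingHom.ker π ⊔ Ideal.span {τ} := by
  rw [hτ, ← Set.image_singleton, ← Ideal.map_span, Ideal.comap_map_of_surjective π hπ, sup_comm]
  rfl

lemma ker_inf_sq_le [IsDomain W] (hπ : Function.Surjective π)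
    (hτ : maximalIdeal W = Ideal.span {π τ}) (hτ0 : π τ ≠ 0) :
    RingHom.ker π ⊓ (maximalIdeal W).comap π ^ 2 ≤ (maximalIdeal W).comap π * RingHom.ker π := by
  rw [comap_maximalIdeal_eq_ker_sup_span hπ hτ]
  rintro y ⟨hy, hy2⟩
  obtain ⟨q, hq, _, hv, rfl⟩ := Submodule.mem_sup.1 (sq_sup_span_singleton_le _ _ hy2)
  obtain ⟨c, rfl⟩ := Ideal.mem_span_singleton'.1 hv
  have hcτ := (add_mem_cancel_left (Ideal.mul_le_right hq)).1 hy
  rw [RingHom.mem_ker, map_mul, map_pow] at hcτ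
  have hc : c ∈ RingHom.ker π := (mul_eq_zero.1 hcτ).resolve_right (pow_ne_zero 2 hτ0)
  have hτ2 : τ ^ 2 ∈ RingHom.ker π ⊔ Ideal.span {τ} := Ideal.mem_sup_right
    (Ideal.pow_mem_of_mem _ (Ideal.mem_span_singleton_self τ) 2 two_pos)
  exact add_mem hq (mul_comm c _ ▸ Ideal.mul_mem_mul hτ2 hc)

lemma notMem_ker_sup_sq [IsDomain W] (hτ : maximalIdeal W = Ideal.span {π τ}) (hτ0 : π τ ≠ 0) :
    τ ∉ RingHom.ker π ⊔ (maximalIdeal W).comap π ^ 2 := by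
  have hle : RingHom.ker π ⊔ (maximalIdeal W).comap π ^ 2 ≤ (maximalIdeal W ^ 2).comap π :=
    sup_le (Ideal.ker_le_comap π) (Ideal.le_comap_pow π 2)
  intro hmem
  have hdvd := hle hmem
  rw [Ideal.mem_comap, hτ, Ideal.span_singleton_pow, Ideal.mem_span_singleton] at hdvd
  obtain ⟨c, hc⟩ := hdvd
  have hτu : IsUnit (π τ) := by
    refine .of_mul_eq_one c (mul_left_cancel₀ hτ0 ?_)
    rw [mul_one, ← mul_assoc, ← sq, ← hc]
  exact (mem_maximalIdeal _).1 (hτ ▸ Ideal.mem_span_singleton_self (π τ)) hτu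

end ResidueSurjection

section KrullAkizuki

section Overring

variable {D W : Type*} [CommRing D] [CommRing W] [Algebra D W] {s : D}

/-- If `s ^ (n + 1) w` lies in `D`, stabilization of the ideals `(s ^ n W ∩ D) + s D` lets one
subtract a multiple of `s` from `w` to get an element with `s ^ n w'` in `D`. -/
lemma exists_pow_mul_eq_add [IsArtinian D (D ⧸ Ideal.span {s})]
    (hs : IsLeftRegular (algebraMap D W s))
    (hW : ∀ w : W, ∃ n d, algebraMap D W s ^ n * w = algebraMap D W d) :
    ∃ N, ∀ w, ∃ d w',
      algebraMap D W s ^ N * w = algebraMap D W d + algebraMap D W s ^ (N + 1) * w' := by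
  let J (n : ℕ) : Ideal D := (Ideal.span {algebraMap D W s ^ n}).comap (algebraMap D W)
  have hJ : Antitone fun n => Submodule.map (Submodule.mkQ (Ideal.span {s})) (J n) := fun n k hnk =>
    Submodule.map_mono (Ideal.comap_mono (Ideal.span_singleton_le_span_singleton.2
      (pow_dvd_pow _ hnk)))
  obtain ⟨N, hN⟩ := IsArtinian.monotone_stabilizes ⟨_, hJ.dual_right⟩
  have hstab (n : ℕ) (hn : N ≤ n) : J n ≤ Ideal.span {s} ⊔ J (n + 1) := by
    have heq : Submodule.map (Submodule.mkQ (Ideal.span {s})) (J n) =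
        Submodule.map (Submodule.mkQ (Ideal.span {s})) (J (n + 1)) :=
      (hN n hn).symm.trans (hN (n + 1) (hn.trans n.le_succ))
    have := Submodule.map_le_iff_le_comap.1 heq.le
    rwa [Submodule.comap_map_mkQ] at this
  refine ⟨N, fun w => ?_⟩
  obtain ⟨n, d, hd⟩ := hW w
  induction n generalizing w d with
  | zero => exact ⟨s ^ N * d, 0, by simp [← hd]⟩
  | succ n ih =>
    rcases le_or_gt (n + 1) N with hn | hn
    · obtain ⟨k, rfl⟩ := Nat.exists_eq_add_of_le hn
      exact ⟨s ^ k * d, 0, by rw [map_mul, map_pow, ← hd]; ring⟩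
    have hdJ : d ∈ J (n + 1) := Ideal.mem_span_singleton'.2 ⟨w, by rw [mul_comm, hd]⟩
    obtain ⟨_, hu, e, he, rfl⟩ := Submodule.mem_sup.1 (hstab (n + 1) hn.le hdJ)
    obtain ⟨c, rfl⟩ := Ideal.mem_span_singleton'.1 hu
    obtain ⟨v, hv⟩ := Ideal.mem_span_singleton'.1 he
    have hc : algebraMap D W s ^ n * (w - algebraMap D W s * v) = algebraMap D W c := by
      refine hs ?_
      simp only [map_add, map_mul, ← hv] at hd ⊢
      linear_combination hd
    obtain ⟨d', w', hw'⟩ := ih _ c hc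
    exact ⟨d', w' + v, by linear_combination hw'⟩

lemma fg_of_algebraMap_mem [IsNoetherianRing D] (hs : IsLeftRegular (algebraMap D W s)) {N : ℕ}
    (hN : ∀ w, ∃ d w',
      algebraMap D W s ^ N * w = algebraMap D W d + algebraMap D W s ^ (N + 1) * w')
    {I : Ideal W} (hI : algebraMap D W s ∈ I) : I.FG := by
  set σ := algebraMap D W s
  have hinj : Function.Injective (LinearMap.mulLeft W (σ ^ N)) := hs.pow N
  refine Submodule.fg_of_fg_map_injective _ hinj ?_
  let J : Ideal W := Submodule.map (LinearMap.mulLeft W (σ ^ N)) I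
  have hJ : J = (J.comap (algebraMap D W)).map (algebraMap D W) ⊔ Ideal.span {σ ^ (N + 1)} := by
    refine le_antisymm ?_ (sup_le Ideal.map_comap_le ?_)
    · rintro _ ⟨w, hw, rfl⟩
      obtain ⟨d, w', hd⟩ := hN w
      rw [LinearMap.mulLeft_apply, hd]
      refine add_mem (Ideal.mem_sup_left (Ideal.mem_map_of_mem _ ?_))
        (Ideal.mem_sup_right (Ideal.mul_mem_right _ _ (Ideal.mem_span_singleton_self _)))
      refine ⟨w - σ * w', sub_mem hw (I.mul_mem_right _ hI), ?_⟩
      rw [LinearMap.mulLeft_apply]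
      linear_combination hd
    · exact (Ideal.span_singleton_le_iff_mem _).2 ⟨σ, hI, (pow_succ σ N).symm⟩
  change J.FG
  rw [hJ]
  exact Submodule.FG.sup (Ideal.FG.map (IsNoetherian.noetherian _) _)
    (Submodule.fg_span_singleton _)

end Overring

section Dominating

variable {D : Type*} [CommRing D] [IsDomain D] [IsLocalRing D] [Ring.KrullDimLE 1 D]

lemma exists_dvd_pow_of_mem_maximalIdeal {s b : D}
    (hs : s ∈ maximalIdeal D) (hb : b ≠ 0) : ∃ n, b ∣ s ^ n := by
  suffices s ∈ (Ideal.span {b}).radical by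
    obtain ⟨n, hn⟩ := this
    exact ⟨n, Ideal.mem_span_singleton.1 hn⟩
  rw [Ideal.radical_eq_sInf, Ideal.mem_sInf]
  rintro q ⟨hbq, hq⟩
  have hq0 : q ≠ ⊥ := fun h => hb (by simpa [h] using hbq)
  rwa [eq_maximalIdeal (hq.isMaximal_of_ne_bot hq0)]

variable [IsNoetherianRing D]

lemma isNoetherianRing_of_exists_mul_eq {W : Type*} [CommRing W] [IsDomain W]
    [Algebra D W] (hDW : Function.Injective (algebraMap D W))
    (hW : ∀ w : W, ∃ b c : D, b ≠ 0 ∧ algebraMap D W b * w = algebraMap D W c) :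
    IsNoetherianRing W := by
  refine ⟨fun I => ?_⟩
  rcases eq_or_ne I ⊥ with rfl | hI
  · exact Submodule.fg_bot
  obtain ⟨w, hw, hw0⟩ := Submodule.exists_mem_ne_zero_of_ne_bot hI
  obtain ⟨b, s, hb, hbs⟩ := hW w
  have hsI : algebraMap D W s ∈ I := hbs ▸ Ideal.mul_mem_left I _ hw
  have hs0 : algebraMap D W s ≠ 0 :=
    hbs ▸ mul_ne_zero ((map_ne_zero_iff _ hDW).2 hb) hw0
  by_cases hs : IsUnit s
  · rw [Ideal.eq_top_of_isUnit_mem I hsI (hs.map _)]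
    exact Ideal.fg_top W
  have := (isFiniteLength_iff_isNoetherian_isArtinian.1 (isFiniteLength_quotient_span_singleton D
    (mem_nonZeroDivisors_of_ne_zero ((map_ne_zero_iff _ hDW).1 hs0)))).2
  obtain ⟨N, hN⟩ := exists_pow_mul_eq_add (IsLeftCancelMulZero.mul_left_cancel_of_ne_zero hs0)
    fun w => by
      obtain ⟨b, c, hb, hbc⟩ := hW w
      obtain ⟨n, e, he⟩ := exists_dvd_pow_of_mem_maximalIdeal ((mem_maximalIdeal s).2 hs) hb
      refine ⟨n, e * c, ?_⟩
      rw [← map_pow, he, map_mul, map_mul, ← hbc]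
      ring
  exact fg_of_algebraMap_mem (IsLeftCancelMulZero.mul_left_cancel_of_ne_zero hs0) hN hsI

theorem exists_isDiscreteValuationRing_isLocalHom (hD : ¬IsField D)
    (K : Type*) [Field K] [Algebra D K] [IsFractionRing D K] :
    ∃ (V : ValuationSubring K) (hV : ∀ d, algebraMap D K d ∈ V.toSubring),
      IsDiscreteValuationRing V ∧ IsLocalHom ((algebraMap D K).codRestrict V.toSubring hV) := by
  obtain ⟨V, hV, hloc⟩ := IsLocalRing.exists_factor_valuationRing (algebraMap D K)
  refine ⟨V, hV, ?_, hloc⟩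
  let _ : Algebra D V := ((algebraMap D K).codRestrict V.toSubring hV).toAlgebra
  have hDV : Function.Injective (algebraMap D V) := fun x y hxy =>
    IsFractionRing.injective D K (congrArg Subtype.val hxy)
  have : IsNoetherianRing V := by
    refine isNoetherianRing_of_exists_mul_eq hDV fun w => ?_
    obtain ⟨c, b, hb, hcb⟩ := IsFractionRing.div_surjective (A := D) (w : K)
    refine ⟨b, c, nonZeroDivisors.ne_zero hb, Subtype.ext ?_⟩
    have hb0 : algebraMap D K b ≠ 0 := IsFractionRing.to_map_ne_zero_of_mem_nonZeroDivisors hb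
    change algebraMap D K b * (w : K) = algebraMap D K c
    rw [← hcb, mul_div_cancel₀ _ hb0]
  have hVR : ValuationRing V := inferInstance
  refine ((IsDiscreteValuationRing.TFAE V fun hVf => hD ?_).out 0 1).2 hVR
  rw [isField_iff_maximalIdeal_eq, eq_bot_iff] at hVf ⊢
  intro d hd
  have hdV : algebraMap D V d ∈ maximalIdeal V := map_nonunit (algebraMap D V) d hd
  exact (map_eq_zero_iff _ hDV).1 (hVf hdV)

end Dominating

end KrullAkizuki

section KrullDim

lemma eq_of_le_of_height_le_one {D : Type*} [CommRing D] {p q : Ideal D} [IsDomain D] [p.IsPrime]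
    [q.IsPrime] (hq : q ≠ ⊥) (hqp : q ≤ p) (hp : p.height ≤ 1) : q = p := by
  by_contra hne
  have hlt := Ideal.height_add_one_le_of_lt_of_isPrime (lt_of_le_of_ne hqp hne)
  have hpos := Ideal.height_add_one_le_of_lt_of_isPrime (bot_lt_iff_ne_bot.2 hq)
  rw [Ideal.height_bot, zero_add] at hpos
  have : (1 : ℕ∞) + 1 ≤ 1 := (add_le_add_left hpos 1).trans (hlt.trans hp)
  exact absurd this (by norm_num)

variable {D : Type*} [CommRing D] [IsDomain D] [IsNoetherianRing D] {s : D}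

lemma mem_minimalPrimes_span_singleton (hs : s ≠ 0)
    (hsq : ∀ q : Ideal D, q.IsPrime → q ≠ ⊥ → s ∈ q) {p : Ideal D} [p.IsPrime] (hp : p ≠ ⊥) :
    p ∈ (Ideal.span {s}).minimalPrimes := by
  have hle {r : Ideal D} (hr : r.IsPrime) (hr0 : r ≠ ⊥) : Ideal.span {s} ≤ r :=
    (Ideal.span_singleton_le_iff_mem r).2 (hsq r hr hr0)
  by_contra hmin
  have hnle : ¬ (p : Set D) ⊆ ⋃ r ∈ (Ideal.span {s}).minimalPrimes, r := by
    rw [Ideal.subset_union_prime_finite (f := fun r => r)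
      (Ideal.finite_minimalPrimes_of_isNoetherianRing D (Ideal.span {s})) ⊥ ⊥
      fun r hr _ _ => hr.1.1]
    rintro ⟨r, hr, hpr⟩
    exact hmin (le_antisymm hpr (hr.2 ⟨‹_›, hle ‹_› hp⟩ hpr) ▸ hr)
  obtain ⟨z, hzp, hz⟩ := Set.not_subset.1 hnle
  simp only [Set.mem_iUnion, not_exists, SetLike.mem_coe] at hz
  obtain ⟨r, hr, -⟩ := Ideal.exists_minimalPrimes_le ((Ideal.span_singleton_le_iff_mem p).2 hzp)
  have := hr.1.1
  have hzr : z ∈ r := hr.1.2 (Ideal.mem_span_singleton_self z)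
  obtain ⟨p₀, hp₀, -⟩ := Ideal.exists_minimalPrimes_le (hle ‹p.IsPrime› hp)
  have hr0 : r ≠ ⊥ := fun h => hz p₀ hp₀ ((h ▸ bot_le : r ≤ p₀) hzr)
  obtain ⟨r₁, hr₁, hr₁r⟩ := Ideal.exists_minimalPrimes_le (hle hr.1.1 hr0)
  have := hr₁.1.1
  have hr₁0 : r₁ ≠ ⊥ := fun h => hs (by simpa [h] using hr₁.1.2 (Ideal.mem_span_singleton_self s))
  have heq := eq_of_le_of_height_le_one hr₁0 hr₁r
    (Ideal.height_le_one_of_isPrincipal_of_mem_minimalPrimes _ _ hr)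
  exact hz r₁ hr₁ (heq ▸ hzr)

lemma krullDimLE_one_of_mem_of_ne_bot (hs : s ≠ 0)
    (hsq : ∀ q : Ideal D, q.IsPrime → q ≠ ⊥ → s ∈ q) : Ring.KrullDimLE 1 D := by
  refine Ring.krullDimLE_one_iff_of_isPrime_bot.2 fun q hq0 hq => ?_
  obtain ⟨M, hM, hqM⟩ := q.exists_le_maximal hq.ne_top
  have hqs := mem_minimalPrimes_span_singleton hs hsq hq0
  have hMs := mem_minimalPrimes_span_singleton hs hsq (ne_bot_of_le_ne_bot hq0 hqM)
  exact le_antisymm hqM (hMs.2 hqs.1 hqM) ▸ hM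

end KrullDim

section DominatingQuotient

universe u

/-- The quotient by an ideal maximal among the primes containing `P` but not `s` has dimension
one, since all its nonzero primes contain the image of `s`. -/
theorem exists_isLocalHom_isDiscreteValuationRing {R : Type u} [CommRing R] [IsLocalRing R]
    [IsNoetherianRing R] (P : Ideal R) [P.IsPrime] {s : R} (hsP : s ∉ P)
    (hs : s ∈ maximalIdeal R) :
    ∃ (W : Type u) (_ : CommRing W) (_ : IsDomain W) (_ : IsDiscreteValuationRing W) (ψ : R →+* W),
      IsLocalHom ψ ∧ P ≤ RingHom.ker ψ ∧ s ∉ RingHom.ker ψ := by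
  obtain ⟨q, ⟨hq, hPq, hsq⟩, hmax⟩ := set_has_maximal_iff_noetherian.2
    (inferInstanceAs (IsNoetherian R R)) {q : Ideal R | q.IsPrime ∧ P ≤ q ∧ s ∉ q}
    ⟨P, ‹_›, le_rfl, hsP⟩
  let π := Ideal.Quotient.mk q
  have hπ : IsLocalHom π := .of_surjective π Ideal.Quotient.mk_surjective
  have : IsLocalRing (R ⧸ q) := .of_surjective' π Ideal.Quotient.mk_surjective
  have hπs : π s ≠ 0 := fun h => hsq (Ideal.Quotient.eq_zero_iff_mem.1 h)
  have hmem (p : Ideal (R ⧸ q)) (hp : p.IsPrime) (hp0 : p ≠ ⊥) : π s ∈ p := by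
    by_contra hsp
    have hqp : q < p.comap π := by
      refine (Ideal.mk_ker (I := q)).symm.trans_lt ?_
      exact (Ideal.orderEmbeddingOfSurjective π Ideal.Quotient.mk_surjective).strictMono
        (bot_lt_iff_ne_bot.2 hp0)
    exact hmax (p.comap π) ⟨inferInstance, hPq.trans hqp.le, hsp⟩ hqp
  have := krullDimLE_one_of_mem_of_ne_bot hπs hmem
  have hfield : ¬ IsField (R ⧸ q) := fun h =>
    hπs ((isField_iff_maximalIdeal_eq.1 h).le (map_nonunit π s hs))
  obtain ⟨V, hV, hdvr, hloc⟩ :=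
    exists_isDiscreteValuationRing_isLocalHom hfield (FractionRing (R ⧸ q))
  let φ := (algebraMap (R ⧸ q) (FractionRing (R ⧸ q))).codRestrict V.toSubring hV
  have hφ : Function.Injective φ := fun x y hxy =>
    IsFractionRing.injective (R ⧸ q) (FractionRing (R ⧸ q)) (congrArg Subtype.val hxy)
  have hker : RingHom.ker (φ.comp π) = q := by
    rw [RingHom.ker_comp_of_injective π hφ, Ideal.mk_ker]
  exact ⟨V, inferInstance, inferInstance, hdvr, φ.comp π, RingHom.isLocalHom_comp φ π,
    hPq.trans hker.ge, fun h => hsq (hker.le h)⟩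

end DominatingQuotient

theorem IsRegularSystemOfParameters.mem_pow_of_mul_mem_ker_pow {R : Type*} [CommRing R]
    [IsLocalRing R] [IsNoetherianRing R] {σ : Type*} {x : σ → R}
    (hx : IsRegularSystemOfParameters x) {W : Type*} [CommRing W] [IsDomain W]
    [IsDiscreteValuationRing W] (ψ : R →+* W) [IsLocalHom ψ] {s f : R} {n : ℕ}
    (hs : s ∉ RingHom.ker ψ) (hsf : s * f ∈ RingHom.ker ψ ^ n) : f ∈ maximalIdeal R ^ n := by
  obtain ⟨t, ht⟩ := IsDiscreteValuationRing.exists_irreducible W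
  let π : MvPolynomial W R →+* W := eval₂Hom ψ id
  have hπX (w : W) : π (X w) = w := eval₂Hom_X' ..
  have hπC (r : R) : π (C r) = ψ r := eval₂Hom_C ..
  have hπ : Function.Surjective π := fun w => ⟨X w, hπX w⟩
  have htW : maximalIdeal W = Ideal.span {π (X t)} := by rw [hπX, ht.maximalIdeal_eq]
  have htπ : π (X t) ≠ 0 := by rw [hπX]; exact ht.ne_zero
  have := Ideal.comap_isMaximal_of_surjective π hπ (K := maximalIdeal W)
  have hm : ((maximalIdeal W).comap π).comap C = maximalIdeal R := by
    rw [Ideal.comap_comap, show π.comp C = ψ from RingHom.ext hπC]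
    exact maximalIdeal_comap ψ
  obtain ⟨ι, T, z, i, hz, hi, hzi⟩ := exists_isAdaptedFamily
    (fun _ h => hx.isQuasiRegularFamily_mvPolynomial_of_linearIndependent hm h)
    (comap_maximalIdeal_eq_ker_sup_span hπ htW) (ker_inf_sq_le hπ htW htπ)
    (notMem_ker_sup_sq htW htπ)
  obtain ⟨a, u, ha⟩ := IsDiscreteValuationRing.associated_pow_irreducible hs ht
  refine hx.mem_pow_of_C_mem_pow hm
    (hz.mem_pow_of_mul_mem_pow hi (a := a) (s := X (u : W) * C s) ?_ ?_)
  · rw [RingHom.mem_ker, hzi, map_sub, map_mul, map_pow, hπX, hπX, hπC, ← ha, mul_comm, sub_self]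
  · have hle : (RingHom.ker ψ).map C ≤ RingHom.ker π :=
      Ideal.map_le_iff_le_comap.2 fun r hr => (hπC r).trans hr
    have hCsf := Ideal.pow_right_mono hle n (Ideal.map_pow C (RingHom.ker ψ) n ▸
      Ideal.mem_map_of_mem C hsf)
    rw [mul_assoc, ← C_mul]
    exact Ideal.mul_mem_left _ _ hCsf

theorem IsRegularSystemOfParameters.mem_pow_of_mul_mem_pow {R : Type*} [CommRing R]
    [IsLocalRing R] [IsNoetherianRing R] {σ : Type*} {x : σ → R}
    (hx : IsRegularSystemOfParameters x) (P : Ideal R) [P.IsPrime] {s f : R} {n : ℕ}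
    (hs : s ∉ P) (hsf : s * f ∈ P ^ n) : f ∈ maximalIdeal R ^ n := by
  by_cases hsu : IsUnit s
  · exact Ideal.pow_right_mono (le_maximalIdeal (Ideal.IsPrime.ne_top ‹_›)) n
      ((Ideal.unit_mul_mem_iff_mem _ hsu).1 hsf)
  obtain ⟨W, _, _, _, ψ, _, hPψ, hsψ⟩ :=
    exists_isLocalHom_isDiscreteValuationRing P hs ((mem_maximalIdeal s).2 hsu)
  exact hx.mem_pow_of_mul_mem_ker_pow ψ hsψ (Ideal.pow_right_mono hPψ n hsf)

/-- **Zariski–Nagata** (general version): if `(R, 𝔪)` is a regular local ring and `𝔭 ⊆ 𝔪`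
is a prime ideal, then `𝔭^{(n)} ⊆ 𝔪^n` for every positive integer `n`. -/
theorem symbolicPower_le_pow_maximalIdeal {R : Type*} [CommRing R] [IsLocalRing R]
    (hreg : IsRegularLocal R) (P : Ideal R) [P.IsPrime] (n : ℕ) (hn : 0 < n) :
    symbolicPower P n ≤ IsLocalRing.maximalIdeal R ^ n := by
  obtain ⟨_, s₀, hs₀, hcard⟩ := hreg
  rw [← IsLocalRing.maximalIdeal_height_eq_ringKrullDim] at hcard
  have hheight : (s₀.card : ℕ∞) = (maximalIdeal R).height := WithBot.coe_injective hcard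
  have hx : IsRegularSystemOfParameters (fun i : s₀ => (i : R)) :=
    { finite := inferInstance
      span_range := by simpa using hs₀
      card_le_height := by simpa using hheight.le }
  intro f hf
  rw [symbolicPower, Ideal.mem_comap,
    IsLocalization.algebraMap_mem_map_algebraMap_iff P.primeCompl] at hf
  obtain ⟨s, hs, hsf⟩ := hf
  exact hx.mem_pow_of_mul_mem_pow P hs hsf
end

section
/- Let K be a field and let R be a finitely generated K-algebra that is regular (i.e., the localization R_𝔮 is a regular local ring for every prime ideal 𝔮 of R). Then for every prime ideal 𝔭 of R and every positive integer n, the n-th symbolic power of 𝔭 equals the intersection of the n-th powers of all maximal ideals containing 𝔭: 𝔭^{(n)} = ⋂_{𝔪 maximal, 𝔭 ⊆ 𝔪} 𝔪^n. -/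
open KaehlerDifferential TensorProduct

section Fields

theorem one_tmul_D_eq_zero_iff_forall_pderiv {k σ B : Type*} [CommRing k] [CommRing B]
    [Algebra (MvPolynomial σ k) B] (p : MvPolynomial σ k) :
    (1 : B) ⊗ₜ[MvPolynomial σ k] D k (MvPolynomial σ k) p = 0 ↔
      ∀ i, algebraMap _ B (MvPolynomial.pderiv i p) = 0 := by
  rw [← ((mvPolynomialBasis k σ).baseChange B).repr.map_eq_zero_iff, Finsupp.ext_iff]
  refine forall_congr' fun i ↦ ?_
  rw [Module.Basis.baseChange_repr_tmul, mvPolynomialBasis_repr_apply]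
  simp only [Algebra.smul_def, mul_one, Finsupp.coe_zero, Pi.zero_apply]

theorem formallySmooth_field_iff_forall_pderiv {k σ L : Type*} [CommRing k] [Field L] [Algebra k L]
    (g : MvPolynomial σ k →ₐ[k] L) (hg : Function.Surjective g) :
    Algebra.FormallySmooth k L ↔
      ∀ p ∈ RingHom.ker g, (∀ i, g (MvPolynomial.pderiv i p) = 0) → p ∈ RingHom.ker g ^ 2 := by
  algebraize [g.toRingHom]
  have : IsScalarTower k (MvPolynomial σ k) L := .of_algebraMap_eq' g.comp_algebraMap.symm
  rw [Algebra.formallySmooth_iff, and_iff_right (inferInstanceAs (Module.Projective L Ω[L⁄k])),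
    ← Algebra.FormallySmooth.kerCotangentToTensor_injective_iff (P := MvPolynomial σ k) hg,
    injective_iff_map_eq_zero]
  constructor
  · intro h p (hp : p ∈ RingHom.ker (algebraMap _ L)) hder
    refine (Ideal.toCotangent_eq_zero _ ⟨p, hp⟩).mp (h _ ?_)
    rwa [kerCotangentToTensor_toCotangent, one_tmul_D_eq_zero_iff_forall_pderiv]
  · intro h x hx
    obtain ⟨⟨p, hp⟩, rfl⟩ := Ideal.toCotangent_surjective _ x
    rw [kerCotangentToTensor_toCotangent, one_tmul_D_eq_zero_iff_forall_pderiv] at hx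
    exact (Ideal.toCotangent_eq_zero _ _).mpr (h p hp hx)

/- A polynomial relation among elements of `L` already holds in the subfield generated by the
elements which occur in it, and that subfield is essentially of finite type over `k`. -/
theorem formallySmooth_field_of_perfectField (k L : Type*) [Field k] [Field L] [Algebra k L]
    [PerfectField k] : Algebra.FormallySmooth k L := by
  let g (F : IntermediateField k L) : MvPolynomial F k →ₐ[k] F := MvPolynomial.aeval id
  have hg (F) : Function.Surjective (g F) := fun a ↦ ⟨MvPolynomial.X a, MvPolynomial.aeval_X _ a⟩
  let h : MvPolynomial L k →ₐ[k] L := MvPolynomial.aeval id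
  have hh : Function.Surjective h := fun a ↦ ⟨MvPolynomial.X a, MvPolynomial.aeval_X _ a⟩
  rw [formallySmooth_field_iff_forall_pderiv h hh]
  intro p hp hder
  let F : IntermediateField k L := IntermediateField.adjoin k (p.vars : Set L)
  have : Algebra.EssFiniteType k F := IntermediateField.essFiniteType_iff.mpr ⟨p.vars, rfl⟩
  obtain ⟨q, hqp⟩ := MvPolynomial.exists_rename_eq_of_vars_subset_range p (Subtype.val : F → L)
    Subtype.val_injective (Subtype.range_coe ▸ IntermediateField.subset_adjoin k _)
  have h_rename (q : MvPolynomial F k) : h (MvPolynomial.rename Subtype.val q) = g F q := by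
    rw [MvPolynomial.aeval_rename]
    exact (MvPolynomial.aeval_algebraMap_apply L (id : F → F) q)
  rw [← hqp] at hp hder ⊢
  have hq : q ∈ RingHom.ker (g F) ^ 2 := by
    refine (formallySmooth_field_iff_forall_pderiv (g F) (hg F)).mp inferInstance q ?_ fun i ↦ ?_
    · rwa [RingHom.mem_ker, h_rename, ZeroMemClass.coe_eq_zero] at hp
    · simpa only [MvPolynomial.pderiv_rename Subtype.val_injective, h_rename,
        ZeroMemClass.coe_eq_zero] using hder i
  have := Ideal.mem_map_of_mem (MvPolynomial.rename (R := k) (Subtype.val : F → L)) hq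
  rw [Ideal.map_pow] at this
  refine Ideal.pow_right_mono (Ideal.map_le_iff_le_comap.mpr fun r hr ↦ ?_) 2 this
  rw [Ideal.mem_comap, RingHom.mem_ker, h_rename, RingHom.mem_ker.mp hr, ZeroMemClass.coe_zero]

end Fields

section RegularLocalRings

open IsLocalRing

theorem spanFinrank_span_finset_le_card {T : Type*} [CommRing T] (s : Finset T) :
    (Ideal.span (s : Set T)).spanFinrank ≤ s.card :=
  (Submodule.spanFinrank_span_le_ncard_of_finite s.finite_toSet).trans_eq (Set.ncard_coe_finset s)

section LocalRing

variable {T : Type*} [CommRing T] [IsLocalRing T]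

theorem isLocalRing_quotient {J : Ideal T} (hJ : J ≠ ⊤) : IsLocalRing (T ⧸ J) :=
  have : Nontrivial (T ⧸ J) := Ideal.Quotient.nontrivial_iff.mpr hJ
  .of_surjective' _ Ideal.Quotient.mk_surjective

theorem exists_finset_span_insert_eq_maximalIdeal (hfg : (maximalIdeal T).FG) {x : T}
    (hx : x ∈ maximalIdeal T) (hx2 : x ∉ maximalIdeal T ^ 2) :
    ∃ s : Finset T, Ideal.span {x} ⊔ Ideal.span (s : Set T) = maximalIdeal T ∧
      s.card + 1 = (maximalIdeal T).spanFinrank := by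
  classical
  obtain ⟨s, hcard, (hs : Ideal.span (s : Set T) = _)⟩ :=
    Submodule.FG.exists_span_finset_card_eq_spanFinrank hfg
  have hsm {a : T} (ha : a ∈ s) : a ∈ maximalIdeal T := hs ▸ Ideal.subset_span ha
  obtain ⟨c, -, hc⟩ := Submodule.mem_span_finset.mp (hs.symm ▸ hx : x ∈ Ideal.span (s : Set T))
  obtain ⟨i, hi, hci⟩ : ∃ i ∈ s, IsUnit (c i) := by
    by_contra! hnon
    refine hx2 (hc ▸ Ideal.sum_mem _ fun i hi ↦ ?_)
    rw [pow_two]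
    exact Ideal.mul_mem_mul (hnon i hi) (hsm hi)
  set J := Ideal.span {x} ⊔ Ideal.span (s.erase i : Set T)
  have hJ {a : T} (ha : a ∈ s.erase i) : a ∈ J := Ideal.mem_sup_right (Ideal.subset_span ha)
  have hiJ : i ∈ J := by
    rw [← Ideal.unit_mul_mem_iff_mem _ hci, ← smul_eq_mul,
      eq_sub_of_add_eq ((Finset.add_sum_erase s (fun a ↦ c a • a) hi).trans hc)]
    exact sub_mem (Ideal.mem_sup_left (Ideal.mem_span_singleton_self x))
      (Ideal.sum_mem _ fun a ha ↦ Ideal.mul_mem_left _ _ (hJ ha))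
  refine ⟨s.erase i, le_antisymm (sup_le ?_ ?_) ?_, (Finset.card_erase_add_one hi).trans hcard⟩
  · rwa [Ideal.span_singleton_le_iff_mem]
  · exact Ideal.span_le.mpr fun a ha ↦ hsm (Finset.mem_of_mem_erase ha)
  · rw [← hs, Ideal.span_le]
    intro a ha
    by_cases hai : a = i
    · rwa [hai]
    · exact hJ (Finset.mem_erase.mpr ⟨hai, ha⟩)

variable [IsNoetherianRing T]

theorem exists_mem_maximalIdeal_notMem_sq_notMem_minimalPrimes
    (hm : maximalIdeal T ∉ minimalPrimes T) :
    ∃ x ∈ maximalIdeal T, x ∉ maximalIdeal T ^ 2 ∧ ∀ q ∈ minimalPrimes T, x ∉ q := by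
  classical
  have hfin := minimalPrimes.finite_of_isNoetherianRing T
  by_contra! hcover
  have hsub : (maximalIdeal T : Set T) ⊆
      ⋃ q ∈ (insert (maximalIdeal T ^ 2) hfin.toFinset : Finset (Ideal T)), (q : Set T) := by
    intro x hx
    simp only [Finset.mem_insert, Set.Finite.mem_toFinset, Set.mem_iUnion, exists_prop,
      exists_eq_or_imp, SetLike.mem_coe]
    exact or_iff_not_imp_left.mpr (hcover x hx)
  obtain ⟨q, hq, hmq⟩ := (Ideal.subset_union_prime (f := id) (maximalIdeal T ^ 2)
    (maximalIdeal T ^ 2) fun q hq hne _ ↦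
      (hfin.mem_toFinset.mp ((Finset.mem_insert.mp hq).resolve_left hne)).1.1).mp hsub
  rcases Finset.mem_insert.mp hq with rfl | hq
  · have hbot : maximalIdeal T = ⊥ :=
      Submodule.eq_bot_of_le_smul_of_le_jacobson_bot _ _ (maximalIdeal T).fg_of_isNoetherianRing
        (hmq.trans (pow_two _).le) (maximalIdeal_le_jacobson _)
    exact hm ⟨⟨inferInstance, bot_le⟩, fun q _ _ ↦ hbot ▸ bot_le⟩
  · have hqmin := hfin.mem_toFinset.mp hq
    have : q.IsPrime := hqmin.1.1
    exact hm (le_antisymm hmq (le_maximalIdeal this.ne_top) ▸ hqmin)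

theorem spanFinrank_maximalIdeal_le_quotient {J : Ideal T} (hJ : J ≤ maximalIdeal T ^ 2)
    [IsLocalRing (T ⧸ J)] :
    (maximalIdeal T).spanFinrank ≤ (maximalIdeal (T ⧸ J)).spanFinrank := by
  classical
  obtain ⟨s, hcard, (hs : Ideal.span (s : Set (T ⧸ J)) = _)⟩ :=
    Submodule.FG.exists_span_finset_card_eq_spanFinrank
      (maximalIdeal (T ⧸ J)).fg_of_isNoetherianRing
  let t : Finset T := s.image (Function.surjInv Ideal.Quotient.mk_surjective)
  have hmap : (Ideal.span (t : Set T)).map (Ideal.Quotient.mk J) = maximalIdeal (T ⧸ J) := by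
    rw [Ideal.map_span, Finset.coe_image, ← Set.image_comp,
      (Function.rightInverse_surjInv _).comp_eq_id, Set.image_id, hs]
  have hle : maximalIdeal T ≤ Ideal.span t ⊔ maximalIdeal T • maximalIdeal T := by
    intro a ha
    refine sup_le_sup_left (hJ.trans (pow_two _).le) _ (Ideal.mem_quotient_iff_mem_sup.mp ?_)
    rw [hmap, ← map_maximalIdeal_of_surjective _ Ideal.Quotient.mk_surjective]
    exact Ideal.mem_map_of_mem _ ha
  have hspan : Ideal.span (t : Set T) = maximalIdeal T := by
    refine le_antisymm (le_maximalIdeal fun htop ↦ ?_) (Submodule.le_of_le_smul_of_le_jacobson_bot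
      (maximalIdeal T).fg_of_isNoetherianRing (maximalIdeal_le_jacobson _) hle)
    rw [htop, Ideal.map_top] at hmap
    exact (maximalIdeal.isMaximal (T ⧸ J)).ne_top hmap.symm
  rw [← hspan, ← hcard]
  exact (spanFinrank_span_finset_le_card t).trans Finset.card_image_le

/- A minimal prime `q` properly contained in the prime `(x)` satisfies `q = x q`. -/
theorem isDomain_of_isPrime_span_singleton {x : T} (hx : x ∈ maximalIdeal T)
    [(Ideal.span {x}).IsPrime] (hmin : ∀ q ∈ minimalPrimes T, x ∉ q) : IsDomain T := by
  obtain ⟨q, hq, hqx⟩ := Ideal.exists_minimalPrimes_le (bot_le : ⊥ ≤ Ideal.span {x})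
  have hprime : q.IsPrime := hq.1.1
  have hle : q ≤ Ideal.span {x} • q := fun y hy ↦ by
    obtain ⟨z, rfl⟩ := Ideal.mem_span_singleton.mp (hqx hy)
    exact Ideal.mul_mem_mul (Ideal.mem_span_singleton_self x)
      ((hprime.mem_or_mem hy).resolve_left (hmin q hq))
  have hbot : q = ⊥ := Submodule.eq_bot_of_le_smul_of_le_jacobson_bot _ _ q.fg_of_isNoetherianRing
    hle (((Ideal.span_singleton_le_iff_mem _).mpr hx).trans (maximalIdeal_le_jacobson _))
  exact @IsDomain.of_bot_isPrime T _ (hbot ▸ hprime)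

end LocalRing

variable {T : Type*} [CommRing T] [IsRegularLocalRing T]

theorem isRegularLocalRing_quotient_span_singleton {x : T} (hx : x ∈ maximalIdeal T)
    (hx2 : x ∉ maximalIdeal T ^ 2) :
    ∃ _ : IsRegularLocalRing (T ⧸ Ideal.span {x}),
      (maximalIdeal (T ⧸ Ideal.span {x})).spanFinrank + 1 = (maximalIdeal T).spanFinrank := by
  classical
  obtain ⟨s, hs, hcard⟩ := exists_finset_span_insert_eq_maximalIdeal
    (maximalIdeal T).fg_of_isNoetherianRing hx hx2
  have : IsLocalRing (T ⧸ Ideal.span {x}) :=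
    isLocalRing_quotient fun h ↦ (mem_maximalIdeal x).mp hx (Ideal.span_singleton_eq_top.mp h)
  have hspan : Ideal.span (s.image (Ideal.Quotient.mk (Ideal.span {x})) : Set _) =
      maximalIdeal (T ⧸ Ideal.span {x}) := by
    rw [← map_maximalIdeal_of_surjective _ Ideal.Quotient.mk_surjective, ← hs, Ideal.map_sup,
      Ideal.map_quotient_self, bot_sup_eq, Finset.coe_image, Ideal.map_span]
  have hedim : (maximalIdeal (T ⧸ Ideal.span {x})).spanFinrank ≤ s.card :=
    hspan ▸ (spanFinrank_span_finset_le_card _).trans Finset.card_image_le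
  have hdim : (s.card : WithBot ℕ∞) ≤ ringKrullDim (T ⧸ Ideal.span {x}) := by
    have := ringKrullDim_le_ringKrullDim_quotient_add_card (R := T) {x} (by
      simpa [ringJacobson_eq_maximalIdeal] using hx)
    rw [← IsRegularLocalRing.spanFinrank_maximalIdeal, ← hcard, Finset.coe_singleton,
      Finset.card_singleton] at this
    exact ENat.WithBot.add_le_add_one_right_iff.mp (by exact_mod_cast this)
  have hreg : IsRegularLocalRing (T ⧸ Ideal.span {x}) :=
    .of_spanFinrank_maximalIdeal_le _ (le_trans (by exact_mod_cast hedim) hdim)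
  refine ⟨hreg, ?_⟩
  rw [← hreg.spanFinrank_maximalIdeal, Nat.cast_le] at hdim
  lia

theorem isDomain_of_isRegularLocalRing (T : Type*) [CommRing T] [IsRegularLocalRing T] :
    IsDomain T := by
  induction hd : (maximalIdeal T).spanFinrank using Nat.strong_induction_on generalizing T with
  | _ d ih
  subst hd
  by_cases hm : maximalIdeal T ∈ minimalPrimes T
  · have hrank : (maximalIdeal T).spanFinrank = 0 := by
      have := IsRegularLocalRing.spanFinrank_maximalIdeal (R := T)
      rw [← maximalIdeal_height_eq_ringKrullDim, Ideal.height_eq_zero_iff.mpr hm] at this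
      exact_mod_cast this
    rw [Submodule.spanFinrank_eq_zero_iff_eq_bot (maximalIdeal T).fg_of_isNoetherianRing,
      ← isField_iff_maximalIdeal_eq] at hrank
    exact hrank.isDomain
  · obtain ⟨x, hx, hx2, hmin⟩ := exists_mem_maximalIdeal_notMem_sq_notMem_minimalPrimes hm
    obtain ⟨_, hrank⟩ := isRegularLocalRing_quotient_span_singleton hx hx2
    have := ih _ (by lia) (T ⧸ Ideal.span {x}) rfl
    have := (Ideal.Quotient.isDomain_iff_prime (Ideal.span {x})).mp this
    exact isDomain_of_isPrime_span_singleton hx hmin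

theorem eq_bot_of_le_maximalIdeal_sq {J : Ideal T} [IsRegularLocalRing (T ⧸ J)]
    (hJ : J ≤ maximalIdeal T ^ 2) : J = ⊥ := by
  have := isDomain_of_isRegularLocalRing T
  by_contra hne
  obtain ⟨x, hxJ, hx0⟩ := Submodule.exists_mem_ne_zero_of_ne_bot hne
  have hxJ : Ideal.span {x} ≤ J := (Ideal.span_singleton_le_iff_mem _).mpr hxJ
  have hdim : ringKrullDim T + 1 ≤ ringKrullDim T := calc
    ringKrullDim T + 1 ≤ ringKrullDim (T ⧸ J) + 1 := by
      gcongr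
      rw [← IsRegularLocalRing.spanFinrank_maximalIdeal,
        ← IsRegularLocalRing.spanFinrank_maximalIdeal, Nat.cast_le]
      exact spanFinrank_maximalIdeal_le_quotient hJ
    _ ≤ ringKrullDim (T ⧸ Ideal.span {x}) + 1 := by
      gcongr
      exact ringKrullDim_le_of_surjective _ (Ideal.Quotient.factor_surjective hxJ)
    _ ≤ ringKrullDim T :=
      ringKrullDim_quotient_succ_le_of_nonZeroDivisor (mem_nonZeroDivisors_of_ne_zero hx0)
  rw [← IsRegularLocalRing.spanFinrank_maximalIdeal (R := T)] at hdim
  norm_cast at hdim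
  lia

theorem inf_maximalIdeal_sq_le_mul (T : Type*) [CommRing T] [IsRegularLocalRing T] (J : Ideal T)
    [IsRegularLocalRing (T ⧸ J)] : J ⊓ maximalIdeal T ^ 2 ≤ maximalIdeal T * J := by
  induction hd : (maximalIdeal T).spanFinrank using Nat.strong_induction_on generalizing T with
  | _ d ih
  subst hd
  by_cases hJ : J ≤ maximalIdeal T ^ 2
  · simp [eq_bot_of_le_maximalIdeal_sq hJ]
  obtain ⟨x, hxJ, hx2⟩ := SetLike.not_le_iff_exists.mp hJ
  have hspan : Ideal.span {x} ≤ J := (Ideal.span_singleton_le_iff_mem _).mpr hxJ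
  have hJm : J ≤ maximalIdeal T :=
    le_maximalIdeal (Ideal.Quotient.nontrivial_iff.mp (inferInstanceAs (Nontrivial (T ⧸ J))))
  obtain ⟨_, hrank⟩ := isRegularLocalRing_quotient_span_singleton (hJm hxJ) hx2
  let mk := Ideal.Quotient.mk (Ideal.span {x})
  have : IsRegularLocalRing ((T ⧸ Ideal.span {x}) ⧸ J.map mk) :=
    .of_ringEquiv (DoubleQuot.quotQuotEquivQuotOfLE hspan).symm
  rintro y ⟨hyJ, hy2⟩
  have hmky : mk y ∈ (maximalIdeal T * J).map mk := by
    rw [Ideal.map_mul, map_maximalIdeal_of_surjective _ Ideal.Quotient.mk_surjective]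
    refine ih _ (by lia) _ (J.map mk) rfl ⟨Ideal.mem_map_of_mem mk hyJ, ?_⟩
    rw [← map_maximalIdeal_of_surjective _ Ideal.Quotient.mk_surjective, ← Ideal.map_pow]
    exact Ideal.mem_map_of_mem mk hy2
  obtain ⟨z, hz, w, hw, rfl⟩ := Submodule.mem_sup.mp (Ideal.mem_quotient_iff_mem_sup.mp hmky)
  obtain ⟨a, rfl⟩ := Ideal.mem_span_singleton'.mp hw
  have hax : a * x ∈ maximalIdeal T ^ 2 := by
    refine (add_mem_cancel_left ?_).mp hy2
    exact pow_two (maximalIdeal T) ▸ Ideal.mul_mono_right hJm hz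
  have ha : a ∈ maximalIdeal T := by
    by_contra ha
    exact hx2 ((Ideal.unit_mul_mem_iff_mem _ (notMem_maximalIdeal.mp ha)).mp hax)
  exact add_mem hz (Ideal.mul_mem_mul ha hxJ)

theorem ker_inf_maximalIdeal_sq_le_mul {T' : Type*} [CommRing T'] [IsRegularLocalRing T']
    (f : T →+* T') (hf : Function.Surjective f) :
    RingHom.ker f ⊓ maximalIdeal T ^ 2 ≤ maximalIdeal T * RingHom.ker f :=
  have : IsRegularLocalRing (T ⧸ RingHom.ker f) :=
    .of_ringEquiv (RingHom.quotientKerEquivOfSurjective hf).symm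
  inf_maximalIdeal_sq_le_mul T (RingHom.ker f)

theorem ker_inf_comap_sq_le_mul {S R : Type*} [CommRing S] [CommRing R] (f : S →+* R)
    (hf : Function.Surjective f) (m : Ideal R) [m.IsMaximal]
    [IsRegularLocalRing (Localization.AtPrime (m.comap f))]
    [IsRegularLocalRing (Localization.AtPrime m)] :
    RingHom.ker f ⊓ m.comap f ^ 2 ≤ m.comap f * RingHom.ker f := by
  rintro x ⟨hxf, hx2⟩
  have hM : (m.comap f).IsMaximal := Ideal.comap_isMaximal_of_surjective f hf
  have hT : (m.comap f).primeCompl.map f = m.primeCompl :=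
    Submonoid.map_comap_eq_of_surjective hf m.primeCompl
  have : IsLocalization ((m.comap f).primeCompl.map f) (Localization.AtPrime m) := by
    rw [hT]; infer_instance
  let F := Localization.localRingHom (m.comap f) m f rfl
  have hker : RingHom.ker F = (RingHom.ker f).map (algebraMap S _) :=
    IsLocalization.ker_map _ f hT
  have hF : Function.Surjective F := IsLocalization.map_surjective_of_surjective _ _ _ hf
  have hlocal := @ker_inf_maximalIdeal_sq_le_mul _ _ _ _ _ _ F hF (algebraMap S _ x) ?_
  · rw [hker, ← Localization.AtPrime.map_eq_maximalIdeal, ← Ideal.map_mul,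
      IsLocalization.algebraMap_mem_map_algebraMap_iff (m.comap f).primeCompl] at hlocal
    obtain ⟨s, hs, hsx⟩ := hlocal
    obtain ⟨t, y, hy, h1⟩ := hM.exists_inv hs
    rw [← one_mul x, ← h1, add_mul, mul_assoc]
    exact add_mem (Ideal.mul_mem_left _ t hsx) (Ideal.mul_mem_mul hy hxf)
  · rw [hker, ← Localization.AtPrime.map_eq_maximalIdeal, ← Ideal.map_pow]
    exact ⟨Ideal.mem_map_of_mem _ hxf, Ideal.mem_map_of_mem _ hx2⟩

end RegularLocalRings

section SplitInjections

variable {A M N : Type*} [CommRing A] [AddCommGroup M] [Module A M] [AddCommGroup N] [Module A N]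

open Polynomial in
/- Cayley–Hamilton: `p(φ - 1) = 0` for a monic `p` congruent to a power of `X` modulo `m`, and the
constant term of `p(X - 1)` is `p(-1) ∉ m`. -/
theorem exists_notMem_comp_eq_smul_id_of_range_sub_id_le [Module.Finite A M] (φ : Module.End A M)
    (m : Ideal A) [m.IsPrime] (hφ : LinearMap.range (φ - LinearMap.id) ≤ m • ⊤) :
    ∃ h ∉ m, ∃ ψ : Module.End A M, ψ ∘ₗ φ = h • LinearMap.id := by
  obtain ⟨p, hp, -, hcoeff, hzero⟩ :=
    LinearMap.exists_monic_and_natDegree_eq_and_coeff_mem_pow_and_aeval_eq_zero A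
      (φ - LinearMap.id) m hφ
  have hmap : p.map (Ideal.Quotient.mk m) = X ^ p.natDegree := by
    ext i
    rw [coeff_map, coeff_X_pow]
    split_ifs with hi
    · rw [hi, hp.coeff_natDegree, map_one]
    rcases lt_or_gt_of_ne hi with hlt | hgt
    · exact Ideal.Quotient.eq_zero_iff_mem.mpr
        (Ideal.pow_le_self (Nat.sub_ne_zero_of_lt hlt) (hcoeff i))
    · rw [coeff_eq_zero_of_natDegree_lt hgt, map_zero]
  have hconst : p.eval (-1) ∉ m := by
    rw [← Ideal.Quotient.eq_zero_iff_mem, ← eval_map_apply, hmap, eval_pow, eval_X, map_neg,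
      map_one]
    exact (isUnit_one.neg.pow _).ne_zero
  have hshift : aeval φ (p.comp (X - 1)) = 0 := by
    rw [aeval_comp, map_sub, aeval_X, map_one]
    exact hzero
  rw [← divX_mul_X_add (p.comp (X - 1)), coeff_zero_eq_eval_zero, eval_comp, map_add, map_mul,
    aeval_X, aeval_C, eval_sub, eval_X, eval_one, zero_sub] at hshift
  refine ⟨p.eval (-1), hconst, -aeval φ (p.comp (X - 1)).divX, ?_⟩
  rw [← Module.End.mul_eq_comp, neg_mul, neg_eq_of_add_eq_zero_right hshift]
  exact Algebra.algebraMap_eq_smul_one _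

theorem exists_range_comp_sub_id_le [Module.Projective A N] (f : M →ₗ[A] N) (m : Ideal A)
    [m.IsMaximal] (hf : (m • ⊤ : Submodule A N).comap f ≤ m • ⊤) :
    ∃ l : N →ₗ[A] M, LinearMap.range (l ∘ₗ f - LinearMap.id) ≤ m • ⊤ := by
  let _ := Ideal.Quotient.field m
  have hle : (m • ⊤ : Submodule A M) ≤ (m • ⊤ : Submodule A N).comap f :=
    Submodule.smul_top_le_comap_smul_top m f
  let fbar := ((m • ⊤ : Submodule A M).mapQ _ f hle).extendScalarsOfSurjective
    (Ideal.Quotient.mk_surjective (I := m))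
  have hfbar : LinearMap.ker fbar = ⊥ := by
    rw [LinearMap.ker_eq_bot']
    intro x hx
    obtain ⟨x, rfl⟩ := Submodule.Quotient.mk_surjective _ x
    have hfx : f x ∈ (m • ⊤ : Submodule A N) := (Submodule.Quotient.mk_eq_zero _).mp hx
    exact (Submodule.Quotient.mk_eq_zero _).mpr (hf hfx)
  obtain ⟨lbar, hlbar⟩ := fbar.exists_leftInverse_of_injective hfbar
  obtain ⟨l, hl⟩ := Module.projective_lifting_property (m • ⊤ : Submodule A M).mkQ
    (lbar.restrictScalars A ∘ₗ (m • ⊤ : Submodule A N).mkQ) (Submodule.mkQ_surjective _)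
  refine ⟨l, ?_⟩
  rintro _ ⟨x, rfl⟩
  have hx : (m • ⊤ : Submodule A M).mkQ (l (f x)) = (m • ⊤ : Submodule A M).mkQ x :=
    (LinearMap.congr_fun hl (f x)).trans
      (LinearMap.congr_fun hlbar ((m • ⊤ : Submodule A M).mkQ x))
  exact (Submodule.Quotient.eq _).mp hx

theorem exists_comp_eq_id_of_forall_isMaximal [Module.Finite A M]
    [Module.Projective A N] (f : M →ₗ[A] N)
    (hf : ∀ (m : Ideal A) [m.IsMaximal], (m • ⊤ : Submodule A N).comap f ≤ m • ⊤) :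
    ∃ l : N →ₗ[A] M, l ∘ₗ f = LinearMap.id := by
  let 𝔞 : Ideal A := (LinearMap.range (LinearMap.lcomp A M f)).comap
    (LinearMap.toSpanSingleton A (Module.End A M) LinearMap.id)
  have h𝔞 : 𝔞 = ⊤ := by
    by_contra hne
    obtain ⟨m, hm, hle⟩ := Ideal.exists_le_maximal 𝔞 hne
    obtain ⟨l, hl⟩ := exists_range_comp_sub_id_le f m (hf m)
    obtain ⟨h, hh, ψ, hψ⟩ := exists_notMem_comp_eq_smul_id_of_range_sub_id_le (l ∘ₗ f) m hl
    exact hh (hle ⟨ψ ∘ₗ l, hψ⟩)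
  obtain ⟨l, hl⟩ : (1 : A) ∈ 𝔞 := h𝔞 ▸ Submodule.mem_top
  exact ⟨l, hl.trans (one_smul A _)⟩

end SplitInjections

section FormallySmooth

variable {k R : Type*} [CommRing R]

theorem mem_ker_sq_of_one_tmul_D_eq_zero {S L : Type*} [CommRing k] [CommRing S] [CommRing L]
    [Algebra k S] [Algebra k L] [Algebra S L] [IsScalarTower k S L] [Algebra.FormallySmooth k S]
    [Algebra.FormallySmooth k L] (hL : Function.Surjective (algebraMap S L)) {x : S}
    (hx : algebraMap S L x = 0) (hDx : (1 : L) ⊗ₜ[S] D k S x = 0) :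
    x ∈ RingHom.ker (algebraMap S L) ^ 2 := by
  have hinj := (Algebra.FormallySmooth.kerCotangentToTensor_injective_iff
    (R := k) (P := S) hL).mpr inferInstance
  exact (Ideal.toCotangent_eq_zero _ ⟨x, hx⟩).mp ((injective_iff_map_eq_zero _).mp hinj _ hDx)

theorem mk_mem_smul_top_of_mem_mul [CommRing k] [Algebra k R] (P : Algebra.Extension k R)
    (m : Ideal R) (x : P.ker) (hx : (x : P.Ring) ∈ m.comap (algebraMap P.Ring R) * P.ker) :
    Algebra.Extension.Cotangent.mk x ∈ (m • ⊤ : Submodule R P.Cotangent) := by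
  let T : Submodule P.Ring P.Cotangent := (m • ⊤ : Submodule R P.Cotangent).restrictScalars P.Ring
  have hle : m.comap (algebraMap P.Ring R) * P.ker ≤
      (T.comap Algebra.Extension.Cotangent.mk).map P.ker.subtype := by
    refine Ideal.mul_le.mpr fun r hr y hy ↦ ⟨r • ⟨y, hy⟩, ?_, rfl⟩
    have h : algebraMap P.Ring R r • Algebra.Extension.Cotangent.mk ⟨y, hy⟩ ∈
      (m • ⊤ : Submodule R P.Cotangent) := Submodule.smul_mem_smul hr Submodule.mem_top
    rw [algebraMap_smul, ← map_smul] at h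
    exact h
  obtain ⟨y, hy, hyx⟩ := hle hx
  exact Subtype.ext hyx ▸ hy

variable [Field k] [PerfectField k] [Algebra k R]

theorem comap_cotangentComplex_smul_top_le (P : Algebra.Extension k R)
    [Algebra.FormallySmooth k P.Ring] (m : Ideal R) [m.IsMaximal]
    [IsRegularLocalRing (Localization.AtPrime (m.comap (algebraMap P.Ring R)))]
    [IsRegularLocalRing (Localization.AtPrime m)] :
    (m • ⊤ : Submodule R P.CotangentSpace).comap P.cotangentComplex ≤ m • ⊤ := by
  let _ := Ideal.Quotient.field m
  intro y hy
  obtain ⟨x, rfl⟩ := Algebra.Extension.Cotangent.mk_surjective y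
  rw [Submodule.mem_comap, Algebra.Extension.cotangentComplex_mk] at hy
  refine mk_mem_smul_top_of_mem_mul P m x (ker_inf_comap_sq_le_mul _ P.algebraMap_surjective m
    ⟨x.2, ?_⟩)
  have := formallySmooth_field_of_perfectField k (R ⧸ m)
  have hker : RingHom.ker (algebraMap P.Ring (R ⧸ m)) = m.comap (algebraMap P.Ring R) := by
    rw [IsScalarTower.algebraMap_eq P.Ring R (R ⧸ m), ← RingHom.comap_ker,
      Ideal.Quotient.algebraMap_eq, Ideal.mk_ker]
  rw [← hker]
  refine mem_ker_sq_of_one_tmul_D_eq_zero (k := k)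
    (Ideal.Quotient.mk_surjective.comp P.algebraMap_surjective) ?_ ?_
  · rw [IsScalarTower.algebraMap_apply P.Ring R, show algebraMap P.Ring R x = 0 from x.2, map_zero]
  let π : P.CotangentSpace →ₗ[R] (R ⧸ m) ⊗[P.Ring] Ω[P.Ring⁄k] :=
    AlgebraTensorModule.map (Algebra.linearMap R (R ⧸ m)) LinearMap.id
  have hle : (m • ⊤ : Submodule R P.CotangentSpace) ≤ LinearMap.ker π := by
    refine Submodule.smul_le.mpr fun r hr z _ ↦ ?_
    rw [LinearMap.mem_ker, map_smul, ← algebraMap_smul (R ⧸ m) r, Ideal.Quotient.algebraMap_eq,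
      Ideal.Quotient.eq_zero_iff_mem.mpr hr, zero_smul]
  exact (hle hy :)

theorem formallySmooth_of_isRegularLocalRing_of_surjective {S : Type*} [CommRing S] [Algebra k S]
    [Algebra S R] [IsScalarTower k S R] [IsNoetherianRing S] [Algebra.FormallySmooth k S]
    (hSR : Function.Surjective (algebraMap S R))
    (hS : ∀ (m : Ideal S) [m.IsMaximal], IsRegularLocalRing (Localization.AtPrime m))
    (hR : ∀ (m : Ideal R) [m.IsMaximal], IsRegularLocalRing (Localization.AtPrime m)) :
    Algebra.FormallySmooth k R := by
  let P : Algebra.Extension k R :=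
    { Ring := S, σ := _, algebraMap_σ := Function.surjInv_eq hSR }
  have : IsNoetherianRing P.Ring := ‹IsNoetherianRing S›
  have : Algebra.FormallySmooth k P.Ring := ‹Algebra.FormallySmooth k S›
  have : Module.Finite P.Ring P.Cotangent :=
    .of_surjective _ Algebra.Extension.Cotangent.mk_surjective
  have : Module.Finite R P.Cotangent := .of_restrictScalars_finite P.Ring _ _
  refine P.formallySmooth_iff_split_injection.mpr (exists_comp_eq_id_of_forall_isMaximal _ ?_)
  intro m _
  have : (m.comap (algebraMap P.Ring R)).IsMaximal := Ideal.comap_isMaximal_of_surjective _ hSR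
  have := hS (m.comap (algebraMap P.Ring R))
  have := hR m
  exact comap_cotangentComplex_smul_top_le P m

theorem formallySmooth_of_finiteType_of_isRegularLocalRing (K : Type*) [Field K] [Algebra k K]
    [Algebra K R] [IsScalarTower k K R] [Algebra.FiniteType K R]
    (hR : ∀ (m : Ideal R) [m.IsMaximal], IsRegularLocalRing (Localization.AtPrime m)) :
    Algebra.FormallySmooth k R := by
  obtain ⟨N, f, hf⟩ := Algebra.FiniteType.iff_quotient_mvPolynomial''.mp ‹Algebra.FiniteType K R›
  algebraize [f.toRingHom]
  have : IsScalarTower K (MvPolynomial (Fin N) K) R := .of_algebraMap_eq' f.comp_algebraMap.symm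
  have : IsScalarTower k (MvPolynomial (Fin N) K) R := .to₁₃₄ k K _ _
  have := formallySmooth_field_of_perfectField k K
  have : Algebra.FormallySmooth k (MvPolynomial (Fin N) K) := .comp k K _
  exact formallySmooth_of_isRegularLocalRing_of_surjective hf (fun m _ ↦ inferInstance) hR

end FormallySmooth

section ProjectiveModules

variable {R N : Type*} [CommRing R] [AddCommGroup N] [Module R N] [Module.Projective R N]

theorem mem_smul_top_iff_forall_dual (I : Ideal R) (x : N) :
    x ∈ (I • ⊤ : Submodule R N) ↔ ∀ φ : Module.Dual R N, φ x ∈ I := by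
  refine ⟨fun hx φ ↦ ?_, fun hx ↦ ?_⟩
  · have := Submodule.smul_top_le_comap_smul_top I φ hx
    rwa [Submodule.mem_comap, smul_eq_mul, Ideal.mul_top] at this
  · obtain ⟨s, hs⟩ := Module.projective_def'.mp ‹Module.Projective R N›
    rw [← show Finsupp.linearCombination R id (s x) = x from LinearMap.congr_fun hs x,
      Finsupp.linearCombination_apply]
    exact Submodule.sum_mem _ fun i _ ↦
      Submodule.smul_mem_smul (hx (Finsupp.lapply i ∘ₗ s)) Submodule.mem_top

theorem smul_mem_smul_top_iff_of_notMem (P : Ideal R) [P.IsPrime] {a : R} (ha : a ∉ P) {x : N} :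
    a • x ∈ (P • ⊤ : Submodule R N) ↔ x ∈ (P • ⊤ : Submodule R N) := by
  simp only [mem_smul_top_iff_forall_dual, map_smul, smul_eq_mul]
  exact forall_congr' fun φ ↦ ‹P.IsPrime›.mul_mem_left_iff ha

theorem mem_sInf_smul_top_iff (s : Set (Ideal R)) (x : N) :
    x ∈ (sInf s • ⊤ : Submodule R N) ↔ ∀ I ∈ s, x ∈ (I • ⊤ : Submodule R N) := by
  simp only [mem_smul_top_iff_forall_dual, Ideal.mem_sInf]
  exact ⟨fun h I hI φ ↦ h φ hI, fun h φ I hI ↦ h I hI φ⟩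

end ProjectiveModules

section AugmentedAlgebras

open MvPolynomial

variable {R : Type*} [CommRing R]

theorem projective_quotient_of_sub_mem {A : Type*} [CommRing A] [Algebra R A]
    [Module.Projective R A] (I : Ideal A) (t : A →ₗ[R] A) (ht : ∀ a ∈ I, t a = 0)
    (hI : ∀ a, t a - a ∈ I) : Module.Projective R (A ⧸ I) := by
  have : Module.Projective R (A ⧸ I.restrictScalars R) := by
    refine .of_split ((I.restrictScalars R).liftQ t ht) (I.restrictScalars R).mkQ ?_
    ext a
    exact (Submodule.Quotient.eq _).mpr (hI a)
  exact .of_equiv (Submodule.Quotient.restrictScalarsEquiv R I)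

theorem projective_quotient_idealOfVars_pow (σ : Type*) (n : ℕ) :
    Module.Projective R (MvPolynomial σ R ⧸ idealOfVars σ R ^ n) := by
  let t : MvPolynomial σ R →ₗ[R] MvPolynomial σ R :=
    ∑ i ∈ Finset.range n, homogeneousComponent i
  have ht (p d) : coeff d (t p) = if d.degree < n then coeff d p else 0 := by
    simp only [t, LinearMap.sum_apply, coeff_sum, coeff_homogeneousComponent,
      Finset.sum_ite_eq, Finset.mem_range]
  refine projective_quotient_of_sub_mem _ t (fun p hp ↦ ?_) fun p ↦ ?_
  · ext d
    rw [ht, coeff_zero]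
    exact ite_eq_right_iff.mpr ((mem_pow_idealOfVars_iff' n p).mp hp d)
  · refine (mem_pow_idealOfVars_iff' n _).mpr fun d hd ↦ ?_
    rw [coeff_sub, ht, if_pos hd, sub_self]

theorem ker_comp_aeval_ker {T : Type*} [CommRing T] [Algebra R T] (ε : T →ₐ[R] R) :
    RingHom.ker (ε.comp (aeval (Subtype.val : RingHom.ker ε → T))) =
      idealOfVars (RingHom.ker ε) R := by
  have h : ε.comp (aeval (Subtype.val : RingHom.ker ε → T)) = aeval 0 :=
    algHom_ext fun x ↦ by
      rw [AlgHom.comp_apply, aeval_X, aeval_X, Pi.zero_apply]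
      exact x.2
  ext p
  rw [h, RingHom.mem_ker, aeval_zero, Algebra.algebraMap_self_apply, ← pow_one (idealOfVars _ R),
    mem_pow_idealOfVars_iff']
  simp only [Nat.lt_one_iff, Finsupp.degree_eq_zero_iff, forall_eq, constantCoeff_eq]

theorem projective_quotient_pow_of_surjective {A T : Type*} [CommRing A] [CommRing T] [Algebra R A]
    [Algebra R T] [Algebra.FormallySmooth R T] (β : A →ₐ[R] T) (hβ : Function.Surjective β)
    (I : Ideal T) {n : ℕ} (hn : n ≠ 0) [Module.Projective R (A ⧸ I.comap β ^ n)] :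
    Module.Projective R (T ⧸ I ^ n) := by
  let J : Ideal A := I.comap β
  let JJ : Ideal (A ⧸ J ^ n) := J.map (Ideal.Quotient.mk (J ^ n))
  let γ : (A ⧸ J ^ n) →ₐ[R] T ⧸ I ^ n := Ideal.quotientMapₐ _ β (Ideal.le_comap_pow β n)
  have hγ : Function.Surjective γ :=
    Ideal.quotientMap_surjective (H := Ideal.le_comap_pow β n) hβ
  have hJJ : JJ ^ n = ⊥ := by rw [← Ideal.map_pow, Ideal.map_quotient_self]
  have hmem (q : A ⧸ J ^ n) (t : T) (ht : t ∈ I) (hq : γ q = Ideal.Quotient.mk (I ^ n) t) :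
      q ∈ JJ := by
    obtain ⟨a, rfl⟩ := Ideal.Quotient.mk_surjective q
    have : β a - t ∈ I := Ideal.pow_le_self hn (Ideal.Quotient.eq.mp hq)
    exact Ideal.mem_map_of_mem _ ((Submodule.sub_mem_iff_left I ht).mp this : a ∈ J)
  have hker : RingHom.ker γ ≤ JJ := fun q hq ↦ hmem q 0 I.zero_mem (hq.trans (map_zero _).symm)
  have hnil : IsNilpotent (RingHom.ker γ) :=
    ⟨n, le_bot_iff.mp ((Ideal.pow_right_mono hker n).trans hJJ.le)⟩
  let α := Algebra.FormallySmooth.liftOfSurjective (Ideal.Quotient.mkₐ R (I ^ n)) γ hγ hnil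
  have hα (t : T) : γ (α t) = Ideal.Quotient.mk (I ^ n) t :=
    Algebra.FormallySmooth.liftOfSurjective_apply _ γ hγ hnil t
  have hαI : I ≤ JJ.comap α := fun t ht ↦ hmem (α t) t ht (hα t)
  have hαn : I ^ n ≤ RingHom.ker α := by
    rw [RingHom.ker_eq_comap_bot, ← hJJ]
    exact (Ideal.pow_right_mono hαI n).trans (Ideal.le_comap_pow α n)
  have hsection : γ.comp (Ideal.Quotient.liftₐ (I ^ n) α hαn) = AlgHom.id R (T ⧸ I ^ n) :=
    Ideal.Quotient.algHom_ext R (AlgHom.ext hα)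
  exact .of_split (Ideal.Quotient.liftₐ (I ^ n) α hαn).toLinearMap γ.toLinearMap
    (congrArg AlgHom.toLinearMap hsection)

theorem projective_quotient_ker_pow {T : Type*} [CommRing T] [Algebra R T]
    [Algebra.FormallySmooth R T] (ε : T →ₐ[R] R) {n : ℕ} (hn : n ≠ 0) :
    Module.Projective R (T ⧸ RingHom.ker ε ^ n) := by
  let β : MvPolynomial (RingHom.ker ε) R →ₐ[R] T := aeval Subtype.val
  have hβ : Function.Surjective β := fun t ↦ by
    have ht : t - algebraMap R T (ε t) ∈ RingHom.ker ε := by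
      rw [RingHom.mem_ker, map_sub, AlgHom.commutes, Algebra.algebraMap_self_apply, sub_self]
    refine ⟨C (ε t) + X ⟨_, ht⟩, ?_⟩
    rw [map_add, algHom_C, aeval_X, add_sub_cancel]
  have : Module.Projective R (MvPolynomial (RingHom.ker ε) R ⧸ (RingHom.ker ε).comap β ^ n) := by
    rw [show (RingHom.ker ε).comap β = _ from ker_comp_aeval_ker ε]
    exact projective_quotient_idealOfVars_pow _ n
  exact projective_quotient_pow_of_surjective β hβ _ hn

end AugmentedAlgebras

section NilpotentIdeals

theorem sup_pow_le_of_pow_eq_bot {B : Type*} [CommRing B] {D : Ideal B} {n : ℕ} (hD : D ^ n = ⊥)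
    (Q : Ideal B) : (D ⊔ Q) ^ n ≤ Q := by
  have hpow : ((D ⊔ Q) ^ n).map (Ideal.Quotient.mk Q) = ⊥ := by
    rw [Ideal.map_pow, Ideal.map_sup, Ideal.map_quotient_self, sup_bot_eq, ← Ideal.map_pow, hD,
      Ideal.map_bot]
  rwa [Ideal.map_eq_bot_iff_le_ker, Ideal.mk_ker] at hpow

theorem ker_factor_pow_eq_bot {A : Type*} [CommRing A] (I : Ideal A) {n : ℕ} (hn : n ≠ 0) :
    RingHom.ker (Ideal.Quotient.factor (Ideal.pow_le_self hn : I ^ n ≤ I)) ^ n = ⊥ := by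
  rw [Ideal.Quotient.factor_ker (Ideal.pow_le_self hn), ← Ideal.map_pow, Ideal.map_quotient_self]

open IsLocalRing in
theorem exists_algHom_quotient_maximalIdeal_pow (k : Type*) {A : Type*} [Field k] [PerfectField k]
    [CommRing A] [IsLocalRing A] [Algebra k A] {n : ℕ} (hn : n ≠ 0) :
    ∃ σ : (A ⧸ maximalIdeal A) →ₐ[k] A ⧸ maximalIdeal A ^ n,
      ∀ x, Ideal.Quotient.factor (Ideal.pow_le_self hn) (σ x) = x := by
  let _ := Ideal.Quotient.field (maximalIdeal A)
  have := formallySmooth_field_of_perfectField k (A ⧸ maximalIdeal A)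
  let ρ := Ideal.Quotient.factorₐ k (Ideal.pow_le_self hn : maximalIdeal A ^ n ≤ maximalIdeal A)
  have hnil : IsNilpotent (RingHom.ker ρ) := ⟨n, ker_factor_pow_eq_bot _ hn⟩
  have hρ : Function.Surjective ρ := Ideal.Quotient.factor_surjective (Ideal.pow_le_self hn)
  exact ⟨Algebra.FormallySmooth.liftOfSurjective (AlgHom.id k _) ρ hρ hnil,
    Algebra.FormallySmooth.liftOfSurjective_apply _ ρ hρ hnil⟩

end NilpotentIdeals

section PrincipalParts

/-- The algebra of principal parts of order less than `n` of `R` over `k`: functions on the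
infinitesimal neighbourhood of order `n - 1` of the diagonal, regarded as an `R`-algebra through the
left factor of `R ⊗[k] R`. -/
abbrev PrincipalParts (k R : Type*) [CommRing k] [CommRing R] [Algebra k R] (n : ℕ) : Type _ :=
  (R ⊗[k] R) ⧸ KaehlerDifferential.ideal k R ^ n

namespace PrincipalParts

/-- The Taylor expansion `f ↦ 1 ⊗ f` of order less than `n`. -/
noncomputable def taylor (k R : Type*) [CommRing k] [CommRing R] [Algebra k R] (n : ℕ) :
    R →ₐ[k] PrincipalParts k R n :=
  (Ideal.Quotient.mkₐ k _).comp Algebra.TensorProduct.includeRight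

section Taylor

variable (k R : Type*) [CommRing k] [CommRing R] [Algebra k R]

theorem projective [Algebra.FormallySmooth k R] {n : ℕ} (hn : n ≠ 0) :
    Module.Projective R (PrincipalParts k R n) :=
  projective_quotient_ker_pow (Algebra.TensorProduct.lmul'' k) hn

variable {R}

theorem exists_pow_eq_bot_taylor_sub_mem (n : ℕ) :
    ∃ 𝔡 : Ideal (PrincipalParts k R n), 𝔡 ^ n = ⊥ ∧
      ∀ a, taylor k R n a - algebraMap R _ a ∈ 𝔡 := by
  refine ⟨(KaehlerDifferential.ideal k R).map (Ideal.Quotient.mk _), ?_, fun a ↦ ?_⟩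
  · rw [← Ideal.map_pow, Ideal.map_quotient_self]
  · exact Ideal.mem_map_of_mem _ (KaehlerDifferential.one_smul_sub_smul_one_mem_ideal k a)

theorem taylor_mem_map_of_mem_pow {P : Ideal R} {n : ℕ} {f : R} (hf : f ∈ P ^ n) :
    taylor k R n f ∈ P.map (algebraMap R (PrincipalParts k R n)) := by
  obtain ⟨𝔡, h𝔡, htaylor⟩ := exists_pow_eq_bot_taylor_sub_mem k (R := R) n
  set Q := P.map (algebraMap R (PrincipalParts k R n))
  have hP : P ≤ (𝔡 ⊔ Q).comap (taylor k R n) := fun a ha ↦ by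
    rw [Ideal.mem_comap, ← sub_add_cancel (taylor k R n a) (algebraMap R _ a)]
    exact Submodule.add_mem_sup (htaylor a) (Ideal.mem_map_of_mem _ ha)
  exact sup_pow_le_of_pow_eq_bot h𝔡 Q
    (Ideal.le_comap_pow (taylor k R n) n (Ideal.pow_right_mono hP n hf))

theorem taylor_dvd_algebraMap_pow (n : ℕ) (a : R) :
    taylor k R n a ∣ algebraMap R (PrincipalParts k R n) a ^ n := by
  obtain ⟨𝔡, h𝔡, htaylor⟩ := exists_pow_eq_bot_taylor_sub_mem k (R := R) n
  have h := sub_dvd_pow_sub_pow (algebraMap R (PrincipalParts k R n) a)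
    (algebraMap R (PrincipalParts k R n) a - taylor k R n a) n
  have hpow : (algebraMap R (PrincipalParts k R n) a - taylor k R n a) ^ n = 0 := by
    rw [← Ideal.mem_bot, ← h𝔡]
    exact Ideal.pow_mem_pow (neg_sub (taylor k R n a) _ ▸ 𝔡.neg_mem (htaylor a)) n
  rwa [sub_sub_cancel, hpow, sub_zero] at h

theorem pow_smul_taylor_mem {P : Ideal R} {n : ℕ} {s f : R} (hsf : s * f ∈ P ^ n) :
    s ^ n • taylor k R n f ∈ (P • ⊤ : Submodule R (PrincipalParts k R n)) := by
  rw [Ideal.smul_top_eq_map, Submodule.restrictScalars_mem, Algebra.smul_def, map_pow]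
  have h := taylor_mem_map_of_mem_pow k hsf
  rw [map_mul] at h
  exact Ideal.mem_of_dvd _ (mul_dvd_mul_right (taylor_dvd_algebraMap_pow k n s) _) h

end Taylor

open IsLocalRing in
/- `a ⊗ b ↦ σ(a) b` for a copy `σ` of the residue field in the target; it kills `P` on the left and
the `n`-th power of the diagonal ideal. -/
theorem exists_algHom_localization_quotient (k : Type*) {R : Type*} [Field k] [PerfectField k]
    [CommRing R] [Algebra k R] (P : Ideal R) [P.IsPrime] {n : ℕ} (hn : n ≠ 0) :
    ∃ Φ : PrincipalParts k R n →ₐ[k]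
        Localization.AtPrime P ⧸ maximalIdeal (Localization.AtPrime P) ^ n,
      (∀ f, Φ (taylor k R n f) = Ideal.Quotient.mk _ (algebraMap R _ f)) ∧
        ∀ a ∈ P, Φ (algebraMap R _ a) = 0 := by
  let A := Localization.AtPrime P
  obtain ⟨σ, hσ⟩ := exists_algHom_quotient_maximalIdeal_pow k (A := A) hn
  let res : R →ₐ[k] A ⧸ maximalIdeal A :=
    (Ideal.Quotient.mkₐ k _).comp (IsScalarTower.toAlgHom k R A)
  let π : R →ₐ[k] A ⧸ maximalIdeal A ^ n :=
    (Ideal.Quotient.mkₐ k _).comp (IsScalarTower.toAlgHom k R A)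
  let ρ := Ideal.Quotient.factorₐ k (Ideal.pow_le_self hn : maximalIdeal A ^ n ≤ maximalIdeal A)
  let Φ : R ⊗[k] R →ₐ[k] A ⧸ maximalIdeal A ^ n := Algebra.TensorProduct.productMap (σ.comp res) π
  have hρΦ : ρ.comp Φ = res.comp (Algebra.TensorProduct.lmul' k) := by
    refine Algebra.TensorProduct.ext' fun a b ↦ ?_
    have ha : ρ (σ (res a)) = res a := hσ (res a)
    have hb : ρ (π b) = res b := rfl
    rw [AlgHom.comp_apply ρ, Algebra.TensorProduct.productMap_apply_tmul, map_mul, hb,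
      AlgHom.comp_apply σ, ha, AlgHom.comp_apply res, Algebra.TensorProduct.lmul'_apply_tmul,
      map_mul]
  have hΦ : KaehlerDifferential.ideal k R ≤ (RingHom.ker ρ).comap Φ := fun t ht ↦ by
    have htρ : ρ (Φ t) = res (Algebra.TensorProduct.lmul' k t) := AlgHom.congr_fun hρΦ t
    rw [Ideal.mem_comap, RingHom.mem_ker, htρ, show Algebra.TensorProduct.lmul' k t = 0 from ht,
      map_zero]
  have hΦn : KaehlerDifferential.ideal k R ^ n ≤ RingHom.ker Φ := by
    rw [RingHom.ker_eq_comap_bot, ← ker_factor_pow_eq_bot (maximalIdeal A) hn]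
    exact (Ideal.pow_right_mono hΦ n).trans (Ideal.le_comap_pow Φ n)
  refine ⟨Ideal.Quotient.liftₐ _ Φ hΦn, fun f ↦ ?_, fun a ha ↦ ?_⟩
  · exact Algebra.TensorProduct.productMap_right_apply _ _ f
  · have hres : res a = 0 := Ideal.Quotient.eq_zero_iff_mem.mpr
      (Localization.AtPrime.map_eq_maximalIdeal (I := P) ▸ Ideal.mem_map_of_mem _ ha)
    exact (Algebra.TensorProduct.productMap_left_apply _ _ a).trans
      ((congrArg σ hres).trans (map_zero σ))

end PrincipalParts

end PrincipalParts

section SymbolicPowers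

theorem mem_symbolicPower_iff {R : Type*} [CommRing R] (P : Ideal R) [P.IsPrime] {n : ℕ} {f : R} :
    f ∈ symbolicPower P n ↔ ∃ s ∉ P, s * f ∈ P ^ n := by
  rw [symbolicPower, Ideal.mem_comap,
    IsLocalization.algebraMap_mem_map_algebraMap_iff P.primeCompl]
  rfl

theorem symbolicPower_of_isMaximal {R : Type*} [CommRing R] (m : Ideal R) [hm : m.IsMaximal]
    (n : ℕ) : symbolicPower m n = m ^ n := by
  ext f
  rw [mem_symbolicPower_iff]
  refine ⟨?_, fun hf ↦ ⟨1, m.one_notMem, (one_mul f).symm ▸ hf⟩⟩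
  rintro ⟨s, hs, hsf⟩
  have hcoprime : Ideal.span {s} ⊔ m ^ n = ⊤ := by
    rw [sup_comm, ← Ideal.isCoprime_iff_sup_eq]
    refine IsCoprime.pow_left (Ideal.isCoprime_iff_sup_eq.mpr (hm.1.2 _ (left_lt_sup.mpr ?_)))
    rwa [Ideal.span_singleton_le_iff_mem]
  obtain ⟨a, b, hb, hab⟩ := Ideal.mem_span_singleton_sup.mp ((Ideal.eq_top_iff_one _).mp hcoprime)
  rw [show f = a * (s * f) + f * b by linear_combination -f * hab]
  exact add_mem (Ideal.mul_mem_left _ a hsf) (Ideal.mul_mem_left _ f hb)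

theorem mem_symbolicPower_iff_taylor_mem_smul_top (k : Type*) {R : Type*} [Field k]
    [PerfectField k] [CommRing R] [Algebra k R] [Algebra.FormallySmooth k R] (P : Ideal R)
    [P.IsPrime] {n : ℕ} (hn : n ≠ 0) {f : R} :
    f ∈ symbolicPower P n ↔
      PrincipalParts.taylor k R n f ∈ (P • ⊤ : Submodule R (PrincipalParts k R n)) := by
  constructor
  · intro hf
    obtain ⟨s, hs, hsf⟩ := (mem_symbolicPower_iff P).mp hf
    have := PrincipalParts.projective k R hn
    exact (smul_mem_smul_top_iff_of_notMem P fun h ↦ hs (‹P.IsPrime›.mem_of_pow_mem n h)).mp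
      (PrincipalParts.pow_smul_taylor_mem k hsf)
  · intro hf
    obtain ⟨Φ, hΦ, hΦP⟩ := PrincipalParts.exists_algHom_localization_quotient k P hn
    have hker : P.map (algebraMap R (PrincipalParts k R n)) ≤ RingHom.ker Φ :=
      Ideal.map_le_iff_le_comap.mpr hΦP
    rw [Ideal.smul_top_eq_map, Submodule.restrictScalars_mem] at hf
    have := (hΦ f).symm.trans (hker hf)
    rwa [Ideal.Quotient.eq_zero_iff_mem, ← Localization.AtPrime.map_eq_maximalIdeal,
      ← Ideal.map_pow] at this

theorem symbolicPower_eq_iInf_pow_of_formallySmooth (k : Type*) {R : Type*} [Field k]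
    [PerfectField k] [CommRing R] [IsJacobsonRing R] [Algebra k R] [Algebra.FormallySmooth k R]
    (P : Ideal R) [P.IsPrime] (n : ℕ) :
    symbolicPower P n = ⨅ (m : Ideal R) (_ : m.IsMaximal) (_ : P ≤ m), m ^ n := by
  rcases eq_or_ne n 0 with rfl | hn
  · simp [symbolicPower, Ideal.one_eq_top, Ideal.map_top]
  have hP : sInf {m : Ideal R | P ≤ m ∧ m.IsMaximal} = P :=
    IsJacobsonRing.out ‹_› ‹P.IsPrime›.isRadical
  have := PrincipalParts.projective k R hn
  ext f
  have hmax (m : Ideal R) [m.IsMaximal] : f ∈ m ^ n ↔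
      PrincipalParts.taylor k R n f ∈ (m • ⊤ : Submodule R (PrincipalParts k R n)) := by
    rw [← symbolicPower_of_isMaximal, mem_symbolicPower_iff_taylor_mem_smul_top k m hn]
  rw [mem_symbolicPower_iff_taylor_mem_smul_top k P hn]
  nth_rw 1 [← hP]
  simp only [mem_sInf_smul_top_iff, Ideal.mem_iInf]
  exact ⟨fun h m hm hPm ↦ (hmax m).mpr (h m ⟨hPm, hm⟩),
    fun h m ⟨hPm, hm⟩ ↦ (hmax m).mp (h m hm hPm)⟩

namespace IsRegularLocal

theorem isRegularLocalRing {R : Type*} [CommRing R] [IsLocalRing R] (hR : IsRegularLocal R) :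
    IsRegularLocalRing R := by
  obtain ⟨_, s, hs, hcard⟩ := hR
  refine .of_spanFinrank_maximalIdeal_le _ (hcard ▸ ?_)
  exact Nat.cast_le.mpr (hs ▸ spanFinrank_span_finset_le_card s)

end IsRegularLocal

theorem exists_perfectField_algebra (K : Type*) [Field K] :
    ∃ (k : Type) (_ : Field k) (_ : PerfectField k), Nonempty (Algebra k K) := by
  obtain ⟨p, hp⟩ := CharP.exists K
  rcases CharP.char_is_prime_or_zero K p with hprime | rfl
  · have : Fact p.Prime := ⟨hprime⟩
    exact ⟨ZMod p, inferInstance, inferInstance, ⟨ZMod.algebra K p⟩⟩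
  · have := CharP.charP_to_charZero K
    exact ⟨ℚ, inferInstance, inferInstance, ⟨inferInstance⟩⟩

theorem symbolicPower_eq_iInf_pow_maximal_general {K R : Type*} [Field K] [CommRing R] [Algebra K R]
    (hfg : Algebra.FiniteType K R)
    (hreg : ∀ (m : Ideal R) [m.IsMaximal], IsRegularLocal (Localization.AtPrime m))
    (P : Ideal R) [P.IsPrime] (n : ℕ) :
    symbolicPower P n = ⨅ (m : Ideal R) (_ : m.IsMaximal) (_ : P ≤ m), m ^ n := by
  obtain ⟨k, _, _, ⟨_⟩⟩ := exists_perfectField_algebra K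
  let _ : Algebra k R := .compHom R (algebraMap k K)
  have : IsScalarTower k K R := .of_algebraMap_eq fun _ ↦ rfl
  have : Algebra.FormallySmooth k R :=
    formallySmooth_of_finiteType_of_isRegularLocalRing K fun m _ ↦ (hreg m).isRegularLocalRing
  have : IsJacobsonRing R := isJacobsonRing_of_finiteType (A := K)
  exact symbolicPower_eq_iInf_pow_of_formallySmooth k P n

end SymbolicPowers

/-- **Zariski's Main Lemma on Holomorphic Functions** (Zariski, Eisenbud–Hochster):
if `R` is a regular finitely generated algebra over a field `K`, then for every prime
ideal `𝔭` of `R` and every positive `n`,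
`𝔭^{(n)} = ⋂_{𝔪 maximal, 𝔭 ⊆ 𝔪} 𝔪^n`. -/
theorem symbolicPower_eq_iInf_pow_maximal {K R : Type*} [Field K] [CommRing R] [Algebra K R]
    (hfg : Algebra.FiniteType K R)
    (hreg : ∀ (q : Ideal R) (hq : q.IsPrime),
      haveI := hq
      IsRegularLocal (Localization.AtPrime q))
    (P : Ideal R) [P.IsPrime] (n : ℕ) (hn : 0 < n) :
    symbolicPower P n = ⨅ (m : Ideal R) (_ : m.IsMaximal) (_ : P ≤ m), m ^ n := by
  exact symbolicPower_eq_iInf_pow_maximal_general hfg (fun m hm ↦ hreg m hm.isPrime) P n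
end
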